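/- arXiv:math/0412313 — 2 statements merged into one kernel-verified Lean document; each statement's English description precedes it below -/
import Mathlib

section
/- Assume the Riemann Hypothesis. There is an absolute constant C such that for all T ≥ 2 and all x > 0, | ∑_{0<γ≤T} x^{iγ} | ≤ C √( T · max_{2≤t≤T} F(x,t) ), where the sum runs over ordinates γ of non-trivial zeros of ζ counted with multiplicity. -/
open Complex Filter MeasureTheory Real Set

noncomputable section

/-- A non-trivial zero of the Riemann zeta function. -/
def ZetaNontrivZero (ρ : ℂ) : Prop := riemannZeta ρ = 0 ∧ 0 < ρ.re ∧ ρ.re < 1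

/-- The multiplicity of `ρ` as a zero of `ζ`. -/
def zetaMult (ρ : ℂ) : ℕ := sInf {n : ℕ | iteratedDeriv n riemannZeta ρ ≠ 0}

/-- The set of non-trivial zeros with ordinate in `(0, T]`. -/
def zerosUpTo (T : ℝ) : Set ℂ := {ρ | ZetaNontrivZero ρ ∧ 0 < ρ.im ∧ ρ.im ≤ T}

/-- Montgomery's pair correlation function `F(x,T)`, zeros counted with multiplicity. -/
def Fxt (x T : ℝ) : ℂ :=
  ∑' p : zerosUpTo T × zerosUpTo T,
    (zetaMult p.1 * zetaMult p.2 : ℂ) *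
      Complex.exp (Complex.I * (((p.1 : ℂ).im - (p.2 : ℂ).im : ℝ) : ℂ) * (Real.log x : ℂ)) *
      ((4 / (4 + ((p.1 : ℂ).im - (p.2 : ℂ).im) ^ 2) : ℝ) : ℂ)

/-- The exponential `e^{-a|ξ| + i b ξ}`. -/
def hbE (a b ξ : ℝ) : ℂ := Complex.exp (-(a * |ξ| : ℝ) + Complex.I * b * ξ)

lemma hbE_integral (a b : ℝ) (ha : 0 < a) :
    Integrable (hbE a b) ∧ ∫ ξ, hbE a b ξ = ((2 * a / (a ^ 2 + b ^ 2) : ℝ) : ℂ) := by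
  have e1 : EqOn (hbE a b) (fun ξ : ℝ => Complex.exp ((-a + Complex.I * b) * ξ)) (Ioi 0) := by
    intro ξ hξ
    simp only [hbE, abs_of_pos (mem_Ioi.mp hξ)]
    congr 1; push_cast; ring
  have e2 : EqOn (hbE a b) (fun ξ : ℝ => Complex.exp ((a + Complex.I * b) * ξ)) (Iic 0) := by
    intro ξ hξ
    simp only [hbE, abs_of_nonpos (mem_Iic.mp hξ)]
    congr 1; push_cast; ring
  have r1 : (-a + Complex.I * b : ℂ).re < 0 := by simpa using ha
  have r2 : 0 < (a + Complex.I * b : ℂ).re := by simpa using ha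
  have i1 : IntegrableOn (hbE a b) (Ioi 0) :=
    (integrableOn_congr_fun e1 measurableSet_Ioi).2 (integrableOn_exp_mul_complex_Ioi r1 0)
  have i2 : IntegrableOn (hbE a b) (Iic 0) :=
    (integrableOn_congr_fun e2 measurableSet_Iic).2 (integrableOn_exp_mul_complex_Iic r2 0)
  refine ⟨?_, ?_⟩
  · rw [← integrableOn_univ, ← Iic_union_Ioi (a := (0:ℝ))]
    exact i2.union i1
  · rw [← intervalIntegral.integral_Iic_add_Ioi i2 i1, setIntegral_congr_fun measurableSet_Ioi e1,
      setIntegral_congr_fun measurableSet_Iic e2, integral_exp_mul_complex_Ioi r1,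
      integral_exp_mul_complex_Iic r2]
    have n1 : (-a + Complex.I * b : ℂ) ≠ 0 := by
      intro h; rw [h] at r1; simp at r1
    have n2 : (a + Complex.I * b : ℂ) ≠ 0 := by
      intro h; rw [h] at r2; simp at r2
    have n3 : ((a:ℂ) ^ 2 + (b:ℂ) ^ 2 : ℂ) ≠ 0 := by
      have : (a ^ 2 + b ^ 2 : ℝ) ≠ 0 := by positivity
      exact_mod_cast this
    have n4 : ((a:ℂ) ^ 2 + (b:ℂ) ^ 2 : ℂ) = -((-a + Complex.I * b) * (a + Complex.I * b)) := by
      ring_nf; rw [Complex.I_sq]; ring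
    push_cast
    rw [n4]
    simp only [mul_zero, Complex.exp_zero]
    field_simp
    ring

lemma hbE_mul_conj (a b a₂ b₂ ξ : ℝ) :
    hbE a b ξ * (starRingEnd ℂ) (hbE a₂ b₂ ξ) = hbE (a + a₂) (b - b₂) ξ := by
  simp only [hbE]
  rw [← Complex.exp_conj, ← Complex.exp_add]
  congr 1
  simp only [map_add, map_neg, map_mul, Complex.conj_I, Complex.conj_ofReal]
  push_cast; ring

/-- Positive semi-definiteness of the Gram kernel of the functions `hbE`. -/
lemma hb_psd {κ : Type*} [Fintype κ] (d : κ → ℂ) (a b : κ → ℝ) (ha : ∀ k, 0 < a k) :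
    0 ≤ (∑ k, ∑ l, d k * (starRingEnd ℂ) (d l) *
      ((2 * (a k + a l) / ((a k + a l) ^ 2 + (b k - b l) ^ 2) : ℝ) : ℂ)).re := by
  have key : (∑ k, ∑ l, d k * (starRingEnd ℂ) (d l) *
      ((2 * (a k + a l) / ((a k + a l) ^ 2 + (b k - b l) ^ 2) : ℝ) : ℂ)) =
      ∫ ξ, ((‖∑ k, d k * hbE (a k) (b k) ξ‖ ^ 2 : ℝ) : ℂ) := by
    have : ∀ ξ, ((‖∑ k, d k * hbE (a k) (b k) ξ‖ ^ 2 : ℝ) : ℂ) =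
        ∑ k, ∑ l, d k * (starRingEnd ℂ) (d l) * hbE (a k + a l) (b k - b l) ξ := by
      intro ξ
      push_cast
      rw [← Complex.mul_conj', map_sum, Finset.sum_mul_sum]
      refine Finset.sum_congr rfl fun k _ => Finset.sum_congr rfl fun l _ => ?_
      rw [map_mul, ← hbE_mul_conj]; ring
    simp_rw [this]
    rw [integral_finsetSum]
    · refine Finset.sum_congr rfl fun k _ => ?_
      rw [integral_finsetSum]
      · refine Finset.sum_congr rfl fun l _ => ?_
        rw [integral_const_mul, (hbE_integral _ _ (add_pos (ha k) (ha l))).2]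
      · intro l _
        exact (hbE_integral _ _ (add_pos (ha k) (ha l))).1.const_mul _
    · intro k _
      refine integrable_finsetSum _ fun l _ => ?_
      exact (hbE_integral _ _ (add_pos (ha k) (ha l))).1.const_mul _
  have hre : ∫ ξ, ((‖∑ k, d k * hbE (a k) (b k) ξ‖ ^ 2 : ℝ) : ℂ) =
      ((∫ ξ, ‖∑ k, d k * hbE (a k) (b k) ξ‖ ^ 2 : ℝ) : ℂ) := integral_ofReal
  rw [key, hre, Complex.ofReal_re]
  exact integral_nonneg fun ξ => by positivity

/-- The quadratic form attached to `w`. -/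
def hbQ {ι : Type*} [Fintype ι] (c : ι → ℂ) (g : ι → ℝ) : ℝ :=
  (∑ i, ∑ j, c i * (starRingEnd ℂ) (c j) * ((4 / (4 + (g i - g j) ^ 2) : ℝ) : ℂ)).re

lemma hb_key {ι : Type*} [Fintype ι] (c : ι → ℂ) (g : ι → ℝ) (A : ℝ) (hA : 2 ≤ A) :
    ‖∑ i, c i * ((A ^ 2 / (A ^ 2 + g i ^ 2) : ℝ) : ℂ)‖ ^ 2 ≤ A / 2 * hbQ c g := by
  set P : ℂ := ∑ i, c i * ((2 * A / (A ^ 2 + g i ^ 2) : ℝ) : ℂ) with hP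
  have h := hb_psd (κ := Option ι) (fun k => k.elim (-((A - 1 : ℝ) : ℂ) * P) c)
    (fun k => k.elim (A - 1) (fun _ => 1)) (fun k => k.elim 0 g)
    (by rintro (_ | _) <;> simp; linarith)
  simp only [Fintype.sum_option, Option.elim] at h
  have hQ : ∑ x, ∑ x_1, c x * (starRingEnd ℂ) (c x_1) *
      ((2 * (1 + 1) / ((1 + 1) ^ 2 + (g x - g x_1) ^ 2) : ℝ) : ℂ) =
      ∑ i, ∑ j, c i * (starRingEnd ℂ) (c j) * ((4 / (4 + (g i - g j) ^ 2) : ℝ) : ℂ) := by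
    norm_num
  have h1 : ∑ x, c x * (starRingEnd ℂ) (-((A - 1 : ℝ) : ℂ) * P) *
      ((2 * (1 + (A - 1)) / ((1 + (A - 1)) ^ 2 + (g x - 0) ^ 2) : ℝ) : ℂ) =
      -((A - 1) * ‖P‖ ^ 2 : ℝ) := by
    have : ∀ x, c x * (starRingEnd ℂ) (-((A - 1 : ℝ) : ℂ) * P) *
      ((2 * (1 + (A - 1)) / ((1 + (A - 1)) ^ 2 + (g x - 0) ^ 2) : ℝ) : ℂ) =
      (starRingEnd ℂ) (-((A - 1 : ℝ) : ℂ) * P) *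
        (c x * ((2 * A / (A ^ 2 + g x ^ 2) : ℝ) : ℂ)) := by
      intro x
      rw [show 1 + (A - 1) = A by ring, sub_zero]; ring
    simp_rw [this]
    rw [← Finset.mul_sum, ← hP, map_mul, map_neg, Complex.conj_ofReal]
    push_cast
    rw [← Complex.mul_conj' P]; ring
  have h2 : ∑ x, -((A - 1 : ℝ) : ℂ) * P * (starRingEnd ℂ) (c x) *
      ((2 * ((A - 1) + 1) / (((A - 1) + 1) ^ 2 + (0 - g x) ^ 2) : ℝ) : ℂ) =
      -((A - 1) * ‖P‖ ^ 2 : ℝ) := by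
    have : ∀ x, -((A - 1 : ℝ) : ℂ) * P * (starRingEnd ℂ) (c x) *
      ((2 * ((A - 1) + 1) / (((A - 1) + 1) ^ 2 + (0 - g x) ^ 2) : ℝ) : ℂ) =
      (-((A - 1 : ℝ) : ℂ) * P) *
        (starRingEnd ℂ) (c x * ((2 * A / (A ^ 2 + g x ^ 2) : ℝ) : ℂ)) := by
      intro x
      rw [show (A - 1) + 1 = A by ring, zero_sub, neg_sq, map_mul, Complex.conj_ofReal]; ring
    simp_rw [this]
    rw [← Finset.mul_sum, ← map_sum, ← hP]
    push_cast
    rw [← Complex.mul_conj' P]; ring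
  have h3 : -((A - 1 : ℝ) : ℂ) * P * (starRingEnd ℂ) (-((A - 1 : ℝ) : ℂ) * P) *
      ((2 * (A - 1 + (A - 1)) / ((A - 1 + (A - 1)) ^ 2 + (0 - 0 : ℝ) ^ 2) : ℝ) : ℂ) =
      ((A - 1) * ‖P‖ ^ 2 : ℝ) := by
    have hA1 : A - 1 ≠ 0 := by linarith
    have : 2 * (A - 1 + (A - 1)) / ((A - 1 + (A - 1)) ^ 2 + (0 - 0 : ℝ) ^ 2) = 1 / (A - 1) := by
      field_simp; ring
    rw [this, map_mul, map_neg, Complex.conj_ofReal]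
    have hA2 : ((A - 1 : ℝ) : ℂ) ≠ 0 := by exact_mod_cast hA1
    rw [Complex.ofReal_mul, Complex.ofReal_pow, ← Complex.mul_conj' P, Complex.ofReal_div,
      Complex.ofReal_one]
    field_simp
  rw [Finset.sum_add_distrib, hQ, h1, h2, h3] at h
  simp only [Complex.add_re, Complex.ofReal_re, ← Complex.ofReal_neg] at h
  change 0 ≤ _ + _ + (_ + hbQ c g) at h
  have hPP : ∑ i, c i * ((A ^ 2 / (A ^ 2 + g i ^ 2) : ℝ) : ℂ) = ((A / 2 : ℝ) : ℂ) * P := by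
    rw [hP, Finset.mul_sum]
    refine Finset.sum_congr rfl fun i _ => ?_
    rw [mul_left_comm, ← Complex.ofReal_mul]
    congr 2
    ring
  rw [hPP, norm_mul, mul_pow, Complex.norm_real, Real.norm_eq_abs, sq_abs]
  have h4 : (A - 1) * ‖P‖ ^ 2 ≤ hbQ c g := by linarith
  have h5 : A / 2 * ‖P‖ ^ 2 ≤ (A - 1) * ‖P‖ ^ 2 := by gcongr; linarith
  calc (A / 2) ^ 2 * ‖P‖ ^ 2 = A / 2 * (A / 2 * ‖P‖ ^ 2) := by ring
    _ ≤ A / 2 * hbQ c g := by gcongr; linarith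

lemma hbQ_nonneg {ι : Type*} [Fintype ι] (c : ι → ℂ) (g : ι → ℝ) : 0 ≤ hbQ c g := by
  have := hb_key c g 2 le_rfl
  have h2 := sq_nonneg ‖∑ i, c i * (((2:ℝ) ^ 2 / ((2:ℝ) ^ 2 + g i ^ 2) : ℝ) : ℂ)‖
  linarith

open Polynomial in
lemma hbQ_eq_zero {ι : Type*} [Fintype ι] (c : ι → ℂ) (g : ι → ℝ) (hg : ∀ i, 0 < g i)
    (hinj : Function.Injective g) (h : hbQ c g = 0) (k : ι) : c k = 0 := by
  classical
  have hz : ∀ A : ℝ, 2 ≤ A → ∑ i, c i * ((A ^ 2 / (A ^ 2 + g i ^ 2) : ℝ) : ℂ) = 0 := by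
    intro A hA
    have := hb_key c g A hA
    rw [h, mul_zero] at this
    have h0 : ‖∑ i, c i * ((A ^ 2 / (A ^ 2 + g i ^ 2) : ℝ) : ℂ)‖ ^ 2 = 0 :=
      le_antisymm this (sq_nonneg _)
    exact norm_eq_zero.mp (pow_eq_zero_iff two_ne_zero |>.mp h0)
  let p : ℂ[X] := ∑ i, C (c i) * ∏ j ∈ Finset.univ.erase i, (X + C ((g j : ℂ) ^ 2))
  have hp : p = 0 := by
    refine Polynomial.eq_zero_of_infinite_isRoot p ?_
    have hinf : ((fun A : ℝ => ((A ^ 2 : ℝ) : ℂ)) '' Ici 2).Infinite := by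
      refine (Ici_infinite (2:ℝ)).image ?_
      intro x hx y hy hxy
      have : x ^ 2 = y ^ 2 := by
        simp only at hxy
        exact_mod_cast hxy
      have hx' : (2:ℝ) ≤ x := hx
      have hy' : (2:ℝ) ≤ y := hy
      nlinarith
    refine hinf.mono ?_
    rintro _ ⟨A, hA, rfl⟩
    have hA' : (2:ℝ) ≤ A := hA
    have hne : ∀ i, ((A ^ 2 : ℝ) : ℂ) + (g i : ℂ) ^ 2 ≠ 0 := by
      intro i
      have : A ^ 2 + g i ^ 2 ≠ 0 := by positivity
      exact_mod_cast this
    have h0 := hz A hA'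
    have hA2 : ((A ^ 2 : ℝ) : ℂ) ≠ 0 := by
      have : A ^ 2 ≠ 0 := by positivity
      exact_mod_cast this
    show p.eval _ = 0
    simp only [p, eval_finsetSum, eval_mul, eval_C, eval_prod, eval_add, eval_X]
    have h6 : ((A ^ 2 : ℝ) : ℂ) * ∑ i, c i * ∏ j ∈ Finset.univ.erase i,
        (((A ^ 2 : ℝ) : ℂ) + (g j : ℂ) ^ 2) =
        (∏ j, (((A ^ 2 : ℝ) : ℂ) + (g j : ℂ) ^ 2)) *
          ∑ i, c i * ((A ^ 2 / (A ^ 2 + g i ^ 2) : ℝ) : ℂ) := by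
      rw [Finset.mul_sum, Finset.mul_sum]
      refine Finset.sum_congr rfl fun i _ => ?_
      rw [← Finset.mul_prod_erase Finset.univ _ (Finset.mem_univ i), Complex.ofReal_div,
        Complex.ofReal_add, Complex.ofReal_pow (g i)]
      have := hne i
      field_simp
    rw [h0, mul_zero] at h6
    exact (mul_eq_zero.mp h6).resolve_left hA2
  have he : p.eval (-(g k : ℂ) ^ 2) = 0 := by rw [hp, eval_zero]
  simp only [p, eval_finsetSum, eval_mul, eval_C, eval_prod, eval_add, eval_X] at he
  rw [Finset.sum_eq_single k] at he
  · refine (mul_eq_zero.mp he).resolve_right ?_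
    refine Finset.prod_ne_zero_iff.mpr ?_
    intro j hj hj0
    have h7 : g j ^ 2 = g k ^ 2 := by
      have : (g j : ℂ) ^ 2 = (g k : ℂ) ^ 2 := by linear_combination hj0
      exact_mod_cast this
    have h8 : g j = g k := by
      have := hg j; have := hg k; nlinarith
    exact Finset.ne_of_mem_erase hj (hinj h8)
  · intro i _ hik
    rw [Finset.prod_eq_zero (i := k), mul_zero]
    · simp [Ne.symm hik]
    · ring
  · simp

/-- A uniform lower bound for the quadratic form when the moduli are prescribed. -/
lemma hbQ_lower {ι : Type*} [Fintype ι] (m g : ι → ℝ) (hm : ∀ i, 0 ≤ m i) (hg : ∀ i, 0 < g i)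
    (hinj : Function.Injective g) :
    ∃ D : ℝ, 0 ≤ D ∧ ∀ c : ι → ℂ, (∀ i, ‖c i‖ = m i) → ∑ i, m i ≤ D * √(hbQ c g) := by
  have hK : IsCompact (Set.pi univ fun i => Metric.sphere (0:ℂ) (m i)) :=
    isCompact_univ_pi fun i => isCompact_sphere _ _
  have hne : (Set.pi univ fun i => Metric.sphere (0:ℂ) (m i)).Nonempty :=
    ⟨fun i => (m i : ℂ), fun i _ => by simp [hm i]⟩
  have hcont : Continuous (fun c : ι → ℂ => hbQ c g) := by
    unfold hbQ; fun_prop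
  obtain ⟨c₀, hc₀, hmin⟩ := hK.exists_isMinOn hne hcont.continuousOn
  by_cases h0 : hbQ c₀ g = 0
  · refine ⟨0, le_rfl, fun c hc => ?_⟩
    have : ∀ i, m i = 0 := by
      intro i
      have := hc₀ i (mem_univ i)
      rw [hbQ_eq_zero c₀ g hg hinj h0 i] at this
      simpa using this.symm
    simp [this]
  · have hpos : 0 < hbQ c₀ g := lt_of_le_of_ne (hbQ_nonneg _ _) (Ne.symm h0)
    have hs : 0 < √(hbQ c₀ g) := Real.sqrt_pos.mpr hpos
    have hN : 0 ≤ ∑ i, m i := Finset.sum_nonneg fun i _ => hm i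
    refine ⟨(∑ i, m i) / √(hbQ c₀ g), by positivity, fun c hc => ?_⟩
    have hle : hbQ c₀ g ≤ hbQ c g := hmin (fun i _ => by simp [hc i])
    have := Real.sqrt_le_sqrt hle
    rw [div_mul_eq_mul_div, le_div_iff₀ hs]
    gcongr

/-- Partial summation. -/
lemma hb_abel {ι : Type*} (g : ι → ℝ) (h : ℝ → ℝ) (hh : MonotoneOn h (Ici 0))
    (h0 : ∀ y, 0 ≤ h y) (c : ι → ℂ) (M : ℝ) (hM : 0 ≤ M) (s : Finset ι) :
    (∀ i ∈ s, 0 ≤ g i) → InjOn g s → (∀ u : ℝ, ‖∑ i ∈ s with g i ≤ u, c i‖ ≤ M) →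
    ∀ H : ℝ, 0 ≤ H → (∀ i ∈ s, h (g i) ≤ H) →
      ‖∑ i ∈ s, c i * ((H - h (g i) : ℝ) : ℂ)‖ ≤ H * M := by
  classical
  induction s using Finset.induction_on_max_value g with
  | empty => intro _ _ _ H hH _; simpa using mul_nonneg hH hM
  | insert a s ha hmax ih =>
    intro hpos hinj hMs H hH hHs
    have hlt : ∀ i ∈ s, g i < g a := by
      intro i hi
      refine lt_of_le_of_ne (hmax i hi) fun he => ?_
      have := hinj (by simp [hi]) (by simp) he
      exact ha (this ▸ hi)
    obtain ⟨b, hba, hb⟩ : ∃ b < g a, ∀ i ∈ s, g i ≤ b := by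
      rcases s.eq_empty_or_nonempty with rfl | hs
      · exact ⟨g a - 1, by linarith, by simp⟩
      · obtain ⟨i, hi, him⟩ := s.exists_max_image g hs
        exact ⟨g i, hlt i hi, him⟩
    have hih := ih (fun i hi => hpos i (Finset.mem_insert_of_mem hi))
      (hinj.mono (by simp)) (fun u => by
        have := hMs (min u b)
        have he : ({i ∈ insert a s | g i ≤ min u b} : Finset ι) = {i ∈ s | g i ≤ u} := by
          ext i
          simp only [Finset.mem_filter, Finset.mem_insert, le_min_iff]
          constructor
          · rintro ⟨rfl | hi, h1, h2⟩
            · linarith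
            · exact ⟨hi, h1⟩
          · rintro ⟨hi, h1⟩
            exact ⟨Or.inr hi, h1, hb i hi⟩
        rwa [he] at this) (h (g a)) (h0 _)
      (fun i hi => hh (hpos i (Finset.mem_insert_of_mem hi))
        (hpos a (Finset.mem_insert_self _ _)) (hmax i hi))
    have htot : ‖∑ i ∈ insert a s, c i‖ ≤ M := by
      have := hMs (g a)
      rwa [Finset.filter_true_of_mem] at this
      intro i hi
      rcases Finset.mem_insert.mp hi with rfl | hi
      · exact le_rfl
      · exact hmax i hi
    have hHa := hHs a (Finset.mem_insert_self _ _)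
    have hsplit : ∑ i ∈ insert a s, c i * ((H - h (g i) : ℝ) : ℂ) =
        ((H - h (g a) : ℝ) : ℂ) * ∑ i ∈ insert a s, c i +
          ∑ i ∈ s, c i * ((h (g a) - h (g i) : ℝ) : ℂ) := by
      have : ∑ i ∈ s, c i * ((h (g a) - h (g i) : ℝ) : ℂ) =
          ∑ i ∈ insert a s, c i * ((h (g a) - h (g i) : ℝ) : ℂ) := by
        rw [Finset.sum_insert ha]; simp
      rw [this, Finset.mul_sum, ← Finset.sum_add_distrib]
      refine Finset.sum_congr rfl fun i _ => ?_
      push_cast; ring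
    rw [hsplit]
    refine (norm_add_le _ _).trans ?_
    rw [norm_mul, Complex.norm_real, Real.norm_eq_abs, abs_of_nonneg (by linarith)]
    have : (H - h (g a)) * ‖∑ i ∈ insert a s, c i‖ ≤ (H - h (g a)) * M := by
      gcongr
    linarith

lemma hb_finite (T : ℝ) : (zerosUpTo T).Finite := by
  have hc : IsCompact (Icc (0:ℝ) 1 ×ℂ Icc (0:ℝ) T) := isCompact_Icc.reProdIm isCompact_Icc
  refine hc.inter_riemannZetaZeros_finite.subset ?_
  rintro ρ ⟨⟨hz, h0, h1⟩, hi, hT⟩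
  exact ⟨⟨⟨h0.le, h1.le⟩, ⟨hi.le, hT⟩⟩, hz⟩

lemma hb_re (hRH : RiemannHypothesis) {T : ℝ} {ρ : ℂ} (h : ρ ∈ zerosUpTo T) : ρ.re = 1 / 2 := by
  obtain ⟨⟨hz, h0, h1⟩, hi, hT⟩ := h
  refine hRH ρ hz ?_ ?_
  · rintro ⟨n, hn⟩
    rw [hn] at hi
    simp at hi
  · rintro rfl
    simp at hi

lemma hb_inj (hRH : RiemannHypothesis) (T : ℝ) : InjOn Complex.im (zerosUpTo T) := by
  intro a ha b hb hab
  exact Complex.ext ((hb_re hRH ha).trans (hb_re hRH hb).symm) hab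

/-- The summand `m(ρ) x^{iγ}`. -/
def hbc (x : ℝ) (ρ : ℂ) : ℂ :=
  (zetaMult ρ : ℂ) * Complex.exp (Complex.I * ((ρ.im : ℝ) : ℂ) * (Real.log x : ℂ))

lemma hbc_norm (x : ℝ) (ρ : ℂ) : ‖hbc x ρ‖ = zetaMult ρ := by
  rw [hbc, norm_mul, show Complex.I * ((ρ.im : ℝ) : ℂ) * (Real.log x : ℂ) =
    ((ρ.im * Real.log x : ℝ) : ℂ) * Complex.I by push_cast; ring, Complex.norm_exp_ofReal_mul_I]
  simp

lemma hb_Fxt (x T : ℝ) [Fintype (zerosUpTo T)] :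
    (Fxt x T).re = hbQ (fun ρ : zerosUpTo T => hbc x ρ) (fun ρ => (ρ : ℂ).im) := by
  rw [Fxt, hbQ, tsum_fintype, Fintype.sum_prod_type]
  congr 1
  refine Finset.sum_congr rfl fun a _ => Finset.sum_congr rfl fun b _ => ?_
  congr 1
  simp only [hbc, map_mul, map_natCast, ← Complex.exp_conj, Complex.conj_I, Complex.conj_ofReal]
  rw [show ∀ p q r s : ℂ, p * q * (r * s) = p * r * (q * s) by intros; ring, ← Complex.exp_add]
  congr 2
  push_cast; ring

/-- Heath-Brown's bound: assuming RH, `|∑_{0<γ≤T} x^{iγ}| ≪ √(T · max_{t≤T} F(x,t))`,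
the sum over ordinates of non-trivial zeros counted with multiplicity. -/
theorem heath_brown_zero_sum_bound (hRH : RiemannHypothesis) :
    ∃ C : ℝ, 0 < C ∧ ∀ T : ℝ, 2 ≤ T → ∀ x : ℝ, 0 < x →
      ‖∑' ρ : zerosUpTo T,
          (zetaMult (ρ : ℂ) : ℂ) *
            Complex.exp (Complex.I * (((ρ : ℂ).im : ℝ) : ℂ) * (Real.log x : ℂ))‖
        ≤ C * Real.sqrt (T * sSup ((fun t => (Fxt x t).re) '' Set.Icc 2 T)) := by

  classical
  let S : ℝ → Finset ℂ := fun T => (hb_finite T).toFinset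
  have hS : ∀ T ρ, ρ ∈ S T ↔ ρ ∈ zerosUpTo T := fun T ρ => (hb_finite T).mem_toFinset
  letI : ∀ T, Fintype (zerosUpTo T) := fun T => (hb_finite T).fintype
  have hsum : ∀ (T : ℝ) (f : ℂ → ℂ), ∑ ρ : zerosUpTo T, f ρ = ∑ ρ ∈ S T, f ρ := fun T f =>
    (Finset.sum_subtype (S T) (hS T) f).symm
  have hsumR : ∀ (T : ℝ) (f : ℂ → ℝ), ∑ ρ : zerosUpTo T, f ρ = ∑ ρ ∈ S T, f ρ := fun T f =>
    (Finset.sum_subtype (S T) (hS T) f).symm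
  have hfilter : ∀ T u, ({ρ ∈ S T | ρ.im ≤ u} : Finset ℂ) = S (min u T) := by
    intro T u
    ext ρ
    simp only [Finset.mem_filter, hS, zerosUpTo, mem_ofPred_eq, le_min_iff]
    tauto
  obtain ⟨D, hD0, hD⟩ := hbQ_lower (fun ρ : zerosUpTo 2 => (zetaMult (ρ : ℂ) : ℝ))
    (fun ρ => (ρ : ℂ).im) (fun _ => Nat.cast_nonneg _) (fun ρ => ρ.2.2.1)
    (fun a b hab => Subtype.ext (hb_inj hRH 2 a.2 b.2 hab))
  refine ⟨D + 5 / 3, by positivity, fun T hT x hx => ?_⟩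
  set V := sSup ((fun t => (Fxt x t).re) '' Set.Icc 2 T) with hV
  have hbdd : BddAbove ((fun t => (Fxt x t).re) '' Set.Icc 2 T) := by
    have hmono : ∀ t, t ≤ T → S t ⊆ S T := by
      intro t ht ρ hρ
      rw [hS] at hρ ⊢
      exact ⟨hρ.1, hρ.2.1, hρ.2.2.trans ht⟩
    refine ⟨(∑ ρ ∈ S T, (zetaMult ρ : ℝ)) * ∑ ρ ∈ S T, (zetaMult ρ : ℝ), ?_⟩
    rintro _ ⟨t, ht, rfl⟩
    have hNt : ∑ ρ ∈ S t, (zetaMult ρ : ℝ) ≤ ∑ ρ ∈ S T, (zetaMult ρ : ℝ) :=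
      Finset.sum_le_sum_of_subset_of_nonneg (hmono t ht.2) fun _ _ _ => Nat.cast_nonneg _
    have hN0 : 0 ≤ ∑ ρ ∈ S t, (zetaMult ρ : ℝ) := Finset.sum_nonneg fun _ _ => Nat.cast_nonneg _
    refine le_trans ?_ (mul_le_mul hNt hNt hN0 (hN0.trans hNt))
    simp only
    rw [hb_Fxt, hbQ, ← hsumR t fun ρ => (zetaMult ρ : ℝ), Finset.sum_mul_sum]
    refine (Complex.re_le_norm _).trans ?_
    refine (norm_sum_le _ _).trans (Finset.sum_le_sum fun a _ => ?_)
    refine (norm_sum_le _ _).trans (Finset.sum_le_sum fun b _ => ?_)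
    rw [norm_mul, norm_mul, RCLike.norm_conj, hbc_norm, hbc_norm, Complex.norm_real,
      Real.norm_eq_abs, abs_of_nonneg (by positivity)]
    refine mul_le_of_le_one_right (by positivity) ?_
    rw [div_le_one (by positivity)]
    nlinarith [sq_nonneg ((a : ℂ).im - (b : ℂ).im)]
  have hle : ∀ t ∈ Set.Icc 2 T, (Fxt x t).re ≤ V := fun t ht => le_csSup hbdd ⟨t, ht, rfl⟩
  have hV0 : 0 ≤ V := by
    refine le_trans ?_ (hle 2 ⟨le_rfl, hT⟩)
    rw [hb_Fxt]; exact hbQ_nonneg _ _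
  -- the maximal partial sum
  obtain ⟨u₀, hu₀⟩ : ∃ u₀ : ℝ, ∀ u : ℝ, ‖∑ ρ ∈ S T with ρ.im ≤ u, hbc x ρ‖ ≤
      ‖∑ ρ ∈ S T with ρ.im ≤ u₀, hbc x ρ‖ := by
    have hfin : (range fun u : ℝ => ‖∑ ρ ∈ S T with ρ.im ≤ u, hbc x ρ‖).Finite := by
      refine ((S T).powerset.finite_toSet.image fun s => ‖∑ ρ ∈ s, hbc x ρ‖).subset ?_
      rintro _ ⟨u, rfl⟩
      exact ⟨_, Finset.mem_coe.mpr (Finset.mem_powerset.mpr (Finset.filter_subset _ _)), rfl⟩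
    obtain ⟨_, ⟨u₀, rfl⟩, h⟩ := hfin.exists_maximal (range_nonempty _) 
    refine ⟨u₀, fun u => ?_⟩
    rcases le_total (‖∑ ρ ∈ S T with ρ.im ≤ u, hbc x ρ‖)
      (‖∑ ρ ∈ S T with ρ.im ≤ u₀, hbc x ρ‖) with h1 | h1
    · exact h1
    · exact h ⟨u, rfl⟩ h1
  set M := ‖∑ ρ ∈ S T with ρ.im ≤ u₀, hbc x ρ‖ with hMdef
  have hM0 : 0 ≤ M := norm_nonneg _
  have hgoal : ∑' ρ : zerosUpTo T, (zetaMult (ρ : ℂ) : ℂ) *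
      Complex.exp (Complex.I * (((ρ : ℂ).im : ℝ) : ℂ) * (Real.log x : ℂ)) =
      ∑ ρ ∈ S T with ρ.im ≤ T, hbc x ρ := by
    rw [tsum_fintype, hfilter, min_self, ← hsum]
    rfl
  rw [hgoal]
  refine (hu₀ T).trans ?_
  have hsq0 : 0 ≤ √(T * V) := Real.sqrt_nonneg _
  rcases lt_or_ge u₀ 2 with hu | hu
  · -- few zeros
    have h1 : M ≤ ∑ ρ ∈ S 2, (zetaMult ρ : ℝ) := by
      rw [hMdef, hfilter]
      refine (norm_sum_le _ _).trans ?_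
      simp only [hbc_norm]
      refine Finset.sum_le_sum_of_subset_of_nonneg ?_ fun _ _ _ => Nat.cast_nonneg _
      intro ρ hρ
      rw [hS] at hρ ⊢
      exact ⟨hρ.1, hρ.2.1, hρ.2.2.trans ((min_le_left _ _).trans hu.le)⟩
    have h2 := hD (fun ρ => hbc x ρ) (fun ρ => hbc_norm x ρ)
    rw [hsumR 2 fun ρ => (zetaMult ρ : ℝ), ← hb_Fxt] at h2
    have h3 : √((Fxt x 2).re) ≤ √(T * V) := by
      refine Real.sqrt_le_sqrt ?_
      have := hle 2 ⟨le_rfl, hT⟩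
      nlinarith
    have h4 := mul_le_mul_of_nonneg_left h3 hD0
    nlinarith
  · set t := min u₀ T with ht
    have htmem : t ∈ Set.Icc 2 T := ⟨le_min hu hT, min_le_right _ _⟩
    have hMt : M = ‖∑ ρ ∈ S t, hbc x ρ‖ := by rw [hMdef, hfilter]
    let h : ℝ → ℝ := fun y => y ^ 2 / ((2 * T) ^ 2 + y ^ 2)
    have hT0 : 0 < T := by linarith
    have hmono : MonotoneOn h (Ici 0) := by
      intro a ha b hb hab
      have ha' : 0 ≤ a := ha
      have : a ^ 2 ≤ b ^ 2 := by gcongr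
      simp only [h]
      rw [div_le_div_iff₀ (by positivity) (by positivity)]
      nlinarith [sq_nonneg (2 * T)]
    have hpos : ∀ ρ ∈ S t, 0 ≤ ρ.im := fun ρ hρ => ((hS _ _).mp hρ).2.1.le
    have hab := hb_abel Complex.im h hmono (fun y => by positivity) (hbc x) M hM0 (S t) hpos
      (fun a ha b hb => hb_inj hRH t ((hS _ _).mp ha) ((hS _ _).mp hb))
      (fun u => by
        have := hu₀ (min u t)
        rwa [hfilter, min_assoc, min_eq_left htmem.2, ← hfilter] at this)
      (1 / 5) (by norm_num) (fun ρ hρ => by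
        have h1 := hpos ρ hρ
        have h2 : ρ.im ≤ T := (((hS _ _).mp hρ).2.2).trans htmem.2
        simp only [h]
        rw [div_le_div_iff₀ (by positivity) (by positivity)]
        nlinarith)
    have hkey := hb_key (fun ρ : zerosUpTo t => hbc x ρ) (fun ρ => (ρ : ℂ).im) (2 * T)
      (by linarith)
    rw [← hb_Fxt, hsum t fun ρ =>
      hbc x ρ * (((2 * T) ^ 2 / ((2 * T) ^ 2 + ρ.im ^ 2) : ℝ) : ℂ)] at hkey
    have hk2 : ‖∑ ρ ∈ S t, hbc x ρ * (((2 * T) ^ 2 / ((2 * T) ^ 2 + ρ.im ^ 2) : ℝ) : ℂ)‖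
        ≤ √(T * V) := by
      refine Real.le_sqrt_of_sq_le (hkey.trans ?_)
      have := hle t htmem
      rw [mul_div_cancel_left₀ _ (two_ne_zero)]
      gcongr
    have hsplit : ((4 / 5 : ℝ) : ℂ) * ∑ ρ ∈ S t, hbc x ρ =
        ∑ ρ ∈ S t, hbc x ρ * (((2 * T) ^ 2 / ((2 * T) ^ 2 + ρ.im ^ 2) : ℝ) : ℂ) -
        ∑ ρ ∈ S t, hbc x ρ * ((1 / 5 - h ρ.im : ℝ) : ℂ) := by
      rw [Finset.mul_sum, ← Finset.sum_sub_distrib]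
      refine Finset.sum_congr rfl fun ρ _ => ?_
      rw [← mul_sub, ← Complex.ofReal_sub, mul_comm]
      congr 2
      simp only [h]
      have : (2 * T) ^ 2 + ρ.im ^ 2 ≠ 0 := by positivity
      field_simp
      ring
    have hfinal : 4 / 5 * M ≤ √(T * V) + 1 / 5 * M := by
      have h1 := norm_sub_le
        (∑ ρ ∈ S t, hbc x ρ * (((2 * T) ^ 2 / ((2 * T) ^ 2 + ρ.im ^ 2) : ℝ) : ℂ))
        (∑ ρ ∈ S t, hbc x ρ * ((1 / 5 - h ρ.im : ℝ) : ℂ))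
      rw [← hsplit, norm_mul, ← hMt, Complex.norm_real, Real.norm_eq_abs,
        abs_of_pos (by norm_num)] at h1
      linarith
    nlinarith
end
end

section
/- Assume the Riemann Hypothesis. Then ψ(x) = x + O( x^{1/2} (log x)² ) for x ≥ 2, i.e. there is an absolute constant C with |ψ(x) − x| ≤ C x^{1/2} (log x)² for all x ≥ 2. -/
open Filter Real

noncomputable section

/-- The Chebyshev function `ψ(x) = ∑_{n ≤ x} Λ(n)`. -/
def chebyshevPsi (x : ℝ) : ℝ := ∑ n ∈ Finset.Iic ⌊x⌋₊, ArithmeticFunction.vonMangoldt n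

namespace VK
open Complex Set Topology MeasureTheory

lemma gammaSeq_norm_le {a b : ℝ} {w : ℂ} (ha : 0 < a) (haw : a ≤ w.re) (hwb : w.re ≤ b) {n : ℕ}
    (hn : n ≠ 0) : ‖Complex.GammaSeq w n‖ ≤ Real.Gamma a + Real.Gamma b := by
  have hb : 0 < b := by linarith
  have hn' : (0:ℝ) ≤ n := Nat.cast_nonneg n
  rw [Complex.GammaSeq_eq_approx_Gamma_integral (by linarith) hn]
  have ia := Real.GammaIntegral_convergent ha
  have ib := Real.GammaIntegral_convergent hb
  have hIntg : IntegrableOn (fun x : ℝ => Real.exp (-x) * x ^ (a-1) + Real.exp (-x) * x ^ (b-1))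
    (Ioi 0) := ia.add ib
  have h1 : ‖∫ x : ℝ in 0..n, ↑((1 - x / n) ^ n) * (x : ℂ) ^ (w - 1)‖ ≤
      ∫ x : ℝ in 0..n, (Real.exp (-x) * x ^ (a-1) + Real.exp (-x) * x ^ (b-1)) := by
    apply intervalIntegral.norm_integral_le_of_norm_le hn'
    · refine Filter.Eventually.of_forall fun x hx => ?_
      have hx0 : 0 < x := hx.1
      rw [norm_mul, Complex.norm_of_nonneg
          (pow_nonneg (sub_nonneg.mpr <| div_le_one_of_le₀ hx.2 <| by positivity) _),
          norm_cpow_eq_rpow_re_of_pos hx0, sub_re, one_re, ← mul_add]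
      have h2 : x ^ (w.re - 1) ≤ x ^ (a-1) + x ^ (b-1) := by
        rcases le_total x 1 with h | h
        · have := Real.rpow_le_rpow_of_exponent_ge hx0 h (show a - 1 ≤ w.re - 1 by linarith)
          have := Real.rpow_nonneg hx0.le (b-1)
          linarith
        · have := Real.rpow_le_rpow_of_exponent_le h (show w.re - 1 ≤ b - 1 by linarith)
          have := Real.rpow_nonneg hx0.le (a-1)
          linarith
      have h3 := one_sub_div_pow_le_exp_neg hx.2
      have := Real.rpow_nonneg hx0.le (w.re-1)
      gcongr
    · rw [intervalIntegrable_iff_integrableOn_Ioc_of_le hn']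
      exact hIntg.mono_set Ioc_subset_Ioi_self
  refine h1.trans ?_
  rw [intervalIntegral.integral_of_le hn', Real.Gamma_eq_integral ha, Real.Gamma_eq_integral hb,
    ← integral_add ia ib]
  apply setIntegral_mono_set hIntg
  · filter_upwards [ae_restrict_mem measurableSet_Ioi] with x hx
    have : (0:ℝ) < x := hx
    simp only [Pi.zero_apply]
    positivity
  · exact Ioc_subset_Ioi_self.eventuallyLE

lemma add_nat_ne_zero {s : ℂ} (hs : 0 < s.re) (j : ℕ) : s + j ≠ 0 := by
  intro h
  have := congrArg Complex.re h
  simp at this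
  have : (0:ℝ) ≤ j := Nat.cast_nonneg j
  linarith

lemma gammaSeq_differentiableAt {s : ℂ} (hs : 0 < s.re) {n : ℕ} (hn : n ≠ 0) :
    DifferentiableAt ℂ (fun w => Complex.GammaSeq w n) s := by
  unfold Complex.GammaSeq
  have hn' : (n:ℂ) ≠ 0 := Nat.cast_ne_zero.mpr hn
  apply DifferentiableAt.fun_div
  · apply DifferentiableAt.mul_const
    exact (differentiableAt_id).const_cpow (Or.inl hn')
  · apply DifferentiableAt.fun_finsetProd
    intro i _
    fun_prop
  · exact Finset.prod_ne_zero_iff.mpr fun j _ => add_nat_ne_zero hs j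

lemma gammaSeq_ne_zero {s : ℂ} (hs : 0 < s.re) {n : ℕ} (hn : n ≠ 0) : Complex.GammaSeq s n ≠ 0 := by
  unfold Complex.GammaSeq
  have hn' : (n:ℂ) ≠ 0 := Nat.cast_ne_zero.mpr hn
  apply div_ne_zero
  · apply mul_ne_zero
    · rw [Ne, Complex.cpow_eq_zero_iff]; tauto
    · exact_mod_cast Nat.factorial_ne_zero n
  · exact Finset.prod_ne_zero_iff.mpr fun j _ => add_nat_ne_zero hs j

lemma gammaSeq_logDeriv {s : ℂ} (hs : 0 < s.re) {n : ℕ} (hn : n ≠ 0) :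
    logDeriv (fun w => Complex.GammaSeq w n) s = Real.log n - ∑ j ∈ Finset.range (n+1), 1 / (s + j) := by
  have hn' : (n:ℂ) ≠ 0 := Nat.cast_ne_zero.mpr hn
  have hpow : DifferentiableAt ℂ (fun w : ℂ => (n:ℂ) ^ w) s :=
    (differentiableAt_id).const_cpow (Or.inl hn')
  have hpow0 : (n:ℂ) ^ s ≠ 0 := by rw [Ne, Complex.cpow_eq_zero_iff]; tauto
  have hf : ((n.factorial : ℕ) : ℂ) ≠ 0 := by exact_mod_cast Nat.factorial_ne_zero n
  unfold Complex.GammaSeq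
  rw [logDeriv_div s (f := fun w : ℂ => (n:ℂ)^w * n.factorial)
    (g := fun w : ℂ => ∏ j ∈ Finset.range (n + 1), (w + j)) (mul_ne_zero hpow0 hf)
    (Finset.prod_ne_zero_iff.mpr fun j _ => add_nat_ne_zero hs j) (hpow.mul_const _)
    (DifferentiableAt.fun_finsetProd fun i _ => by fun_prop)]
  congr 1
  · rw [logDeriv_mul_const _ _ hf, logDeriv_apply]
    have := (hasDerivAt_id s).const_cpow (c := (n:ℂ)) (Or.inl hn')
    simp only [id] at this
    rw [this.deriv, ← Complex.natCast_log]
    field_simp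
  · rw [logDeriv_prod]
    · apply Finset.sum_congr rfl
      intro j _
      rw [logDeriv_apply]
      simp
    · intro j _; exact add_nat_ne_zero hs j
    · intro j _; fun_prop

lemma deriv_gammaSeq_tendsto {s : ℂ} (hs : 0 < s.re) :
    Tendsto (fun n => deriv (fun w => Complex.GammaSeq w n) s) atTop (𝓝 (deriv Complex.Gamma s)) := by
  set r := s.re / 2 with hr
  have hr0 : 0 < r := by positivity
  have hball : ∀ w ∈ Metric.closedBall s r, r ≤ w.re ∧ w.re ≤ s.re + r := by
    intro w hw
    have h1 : |(w - s).re| ≤ r := (abs_re_le_norm _).trans (by simpa [dist_eq_norm] using hw)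
    rw [abs_le, sub_re] at h1
    constructor <;> linarith [h1.1, h1.2]
  have hU : IsOpen {w : ℂ | 0 < w.re} := isOpen_lt continuous_const continuous_re
  have hsub : Metric.closedBall s r ⊆ {w : ℂ | 0 < w.re} := fun w hw => by
    have := (hball w hw).1
    simp only [mem_ofPred_eq]; linarith
  have hG : cderiv r Complex.Gamma s = deriv Complex.Gamma s := by
    apply cderiv_eq_deriv hU _ hr0 hsub
    intro w hw
    apply (differentiableAt_Gamma w _).differentiableWithinAt
    intro m h
    simp only [mem_ofPred_eq] at hw
    rw [h] at hw
    simp at hw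
    have : (0:ℝ) ≤ m := Nat.cast_nonneg m
    linarith
  rw [← hG]
  have hS : ∀ᶠ n : ℕ in atTop, cderiv r (fun w => Complex.GammaSeq w n) s = deriv (fun w => Complex.GammaSeq w n) s := by
    filter_upwards [eventually_ne_atTop 0] with n hn
    apply cderiv_eq_deriv hU _ hr0 hsub
    intro w hw
    exact (gammaSeq_differentiableAt hw hn).differentiableWithinAt
  refine Tendsto.congr' hS ?_
  unfold cderiv
  apply Tendsto.const_smul
  simp only [circleIntegral]
  have hmem : ∀ θ : ℝ, circleMap s r θ ∈ Metric.closedBall s r := fun θ =>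
    Metric.sphere_subset_closedBall (circleMap_mem_sphere s hr0.le θ)
  apply intervalIntegral.tendsto_integral_filter_of_dominated_convergence
    (fun _ => r * ((r^2)⁻¹ * (Real.Gamma r + Real.Gamma (s.re + r))))
  · filter_upwards [eventually_ne_atTop 0] with n hn
    apply Continuous.aestronglyMeasurable
    have h1 : Continuous fun θ => Complex.GammaSeq (circleMap s r θ) n := by
      rw [continuous_iff_continuousAt]
      intro θ
      exact ContinuousAt.comp (f := circleMap s r) (g := fun w => Complex.GammaSeq w n)
        (gammaSeq_differentiableAt (hsub (hmem θ)) hn).continuousAt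
        (continuous_circleMap s r).continuousAt
    have h2 : Continuous fun θ => ((circleMap s r θ - s)^2)⁻¹ := by
      apply Continuous.inv₀
      · have := continuous_circleMap s r
        fun_prop
      · intro θ
        exact pow_ne_zero _ (sub_ne_zero.mpr (circleMap_ne_center hr0.ne'))
    have h3 : Continuous (deriv (circleMap s r)) := by
      have := continuous_circleMap 0 r
      have h : (deriv (circleMap s r)) = fun θ => circleMap 0 r θ * I := by
        ext θ; simp [deriv_circleMap]
      rw [h]; fun_prop
    exact h3.smul (h2.smul h1)
  · filter_upwards [eventually_ne_atTop 0] with n hn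
    refine Filter.Eventually.of_forall fun θ _ => ?_
    have hb := hball _ (hmem θ)
    have := gammaSeq_norm_le hr0 hb.1 hb.2 hn
    simp only [smul_eq_mul, norm_mul, norm_inv, norm_pow, deriv_circleMap, norm_circleMap_zero,
      norm_I, mul_one, circleMap_sub_center, abs_of_pos hr0]
    gcongr
  · exact intervalIntegrable_const
  · refine Filter.Eventually.of_forall fun θ _ => ?_
    apply Tendsto.const_smul
    apply Tendsto.const_smul
    exact Complex.GammaSeq_tendsto_Gamma _

lemma digamma_tendsto {s : ℂ} (hs : 0 < s.re) :
    Tendsto (fun n : ℕ => (Real.log n : ℂ) - ∑ j ∈ Finset.range (n+1), 1 / (s + j)) atTop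
      (𝓝 (logDeriv Complex.Gamma s)) := by
  have h := (deriv_gammaSeq_tendsto hs).div (Complex.GammaSeq_tendsto_Gamma s) (Gamma_ne_zero_of_re_pos hs)
  refine Tendsto.congr' ?_ h
  filter_upwards [eventually_ne_atTop 0] with n hn
  rw [← gammaSeq_logDeriv hs hn, logDeriv_apply]
  rfl

lemma sum_bound {s : ℂ} (hs : 1/4 ≤ s.re) (m : ℕ) :
    ∑ j ∈ Finset.range m, ‖1 / ((1:ℂ) + j) - 1 / (s + j)‖ ≤ 6 + 5 * Real.log (2 + ‖s‖) := by
  have hs0 : 0 < s.re := by linarith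
  have hns : 1/4 ≤ ‖s‖ := hs.trans (Complex.re_le_norm s)
  set N : ℕ := ⌈‖s‖⌉₊ + 1 with hN
  have hN1 : ‖s‖ + 1 ≤ N := by
    rw [hN]; push_cast; linarith [Nat.le_ceil ‖s‖]
  have hN2 : (N:ℝ) ≤ 2 + ‖s‖ := by
    rw [hN]; push_cast; linarith [Nat.ceil_lt_add_one (norm_nonneg s)]
  have hNpos : (0:ℝ) < N := by positivity
  have hs1 : ‖s - 1‖ ≤ ‖s‖ + 1 := by simpa using norm_sub_le s 1
  have hterm : ∀ j : ℕ, ‖1 / ((1:ℂ) + j) - 1 / (s + j)‖ = ‖s-1‖ / ((1+j) * ‖s + j‖) := by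
    intro j
    have h1 : (1:ℂ) + j ≠ 0 := add_nat_ne_zero (by simp) j
    have h2 := add_nat_ne_zero hs0 j
    rw [div_sub_div _ _ h1 h2, norm_div, norm_mul]
    congr 2
    · ring_nf
    · have : ((1:ℂ) + j) = ((1 + j : ℝ) : ℂ) := by push_cast; ring
      rw [this, Complex.norm_of_nonneg (by positivity)]
  have hge : ∀ j : ℕ, ‖s‖ ≤ ‖s + j‖ := by
    intro j
    rw [Complex.norm_def, Complex.norm_def]
    apply Real.sqrt_le_sqrt
    simp only [Complex.normSq_apply, add_re, natCast_re, add_im, natCast_im, add_zero]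
    have : (0:ℝ) ≤ j := Nat.cast_nonneg j
    nlinarith
  have hge2 : ∀ j : ℕ, (j:ℝ) ≤ ‖s + j‖ := by
    intro j
    have := Complex.re_le_norm (s + j)
    simp at this
    linarith
  have hA : ∀ j : ℕ, ‖1 / ((1:ℂ) + j) - 1 / (s + j)‖ ≤ 5 * (1 / (1 + j)) := by
    intro j
    rw [hterm]
    have := hge j
    have h4 : (0:ℝ) < 1 + j := by positivity
    have h5 : 0 < ‖s + j‖ := by linarith
    rw [div_le_iff₀ (by positivity)]
    have : 5 * (1 / (1 + (j:ℝ))) * ((1 + j) * ‖s + j‖) = 5 * ‖s + j‖ := by field_simp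
    rw [this]; linarith
  have hB : ∀ j : ℕ, N ≤ j → ‖1 / ((1:ℂ) + j) - 1 / (s + j)‖ ≤ N * (1 / j - 1 / (j + 1)) := by
    intro j hj
    have hj0 : (0:ℝ) < j := lt_of_lt_of_le hNpos (by exact_mod_cast hj)
    rw [hterm]
    have e : (N:ℝ) * (1 / j - 1 / (j + 1)) = N / ((1 + j) * j) := by field_simp; ring
    rw [e]
    gcongr
    · linarith
    · exact hge2 j
  have hsumN : ∀ k : ℕ, ∑ j ∈ Finset.range k, (1 / (1 + (j:ℝ))) = harmonic k := by
    intro k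
    rw [harmonic]; push_cast
    apply Finset.sum_congr rfl; intro i _; rw [one_div, add_comm]
  have hbase : ∑ j ∈ Finset.range N, ‖1 / ((1:ℂ) + j) - 1 / (s + j)‖ ≤ 5 + 5 * Real.log (2 + ‖s‖) := by
    calc _ ≤ ∑ j ∈ Finset.range N, 5 * (1 / (1 + (j:ℝ))) := Finset.sum_le_sum fun j _ => hA j
      _ = 5 * harmonic N := by rw [← Finset.mul_sum, hsumN]
      _ ≤ 5 * (1 + Real.log N) := by gcongr; exact harmonic_le_one_add_log N
      _ ≤ 5 * (1 + Real.log (2 + ‖s‖)) := by gcongr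
      _ = _ := by ring
  rcases le_total m N with h | h
  · calc _ ≤ ∑ j ∈ Finset.range N, ‖1 / ((1:ℂ) + j) - 1 / (s + j)‖ := by
          apply Finset.sum_le_sum_of_subset_of_nonneg
          · simpa using h
          · intros; positivity
      _ ≤ _ := by linarith
  · have key : ∑ j ∈ Finset.range m, ‖1 / ((1:ℂ) + j) - 1 / (s + j)‖ ≤
        5 + 5 * Real.log (2 + ‖s‖) + N * (1 / N - 1 / m) := by
      induction m, h using Nat.le_induction with
      | base => simpa using hbase
      | succ k hk ih =>
        rw [Finset.sum_range_succ]
        have := hB k hk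
        push_cast
        linarith
    have e : (N:ℝ) * (1 / N - 1 / m) ≤ 1 := by
      have : (N:ℝ) * (1/N) = 1 := by field_simp
      rw [mul_sub, this]
      have : (0:ℝ) ≤ N * (1/m) := by positivity
      linarith
    linarith

theorem norm_digamma_le {s : ℂ} (hs : 1/4 ≤ s.re) :
    ‖logDeriv Complex.Gamma s‖ ≤ 17 * Real.log (2 + ‖s‖) := by
  have hs0 : 0 < s.re := by linarith
  apply le_of_tendsto (digamma_tendsto hs0).norm
  filter_upwards [eventually_ge_atTop 1] with n hn
  have h1 := sum_bound hs (n+1)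
  have hn' : (1:ℝ) ≤ n := by exact_mod_cast hn
  have e : (Real.log n : ℂ) - ∑ j ∈ Finset.range (n+1), 1 / (s + j) =
     ((Real.log n - harmonic (n+1) : ℝ) : ℂ) +
       ∑ j ∈ Finset.range (n+1), (1 / ((1:ℂ) + j) - 1 / (s + j)) := by
    rw [Finset.sum_sub_distrib]
    have : ((harmonic (n+1) : ℝ) : ℂ) = ∑ j ∈ Finset.range (n+1), 1 / ((1:ℂ) + j) := by
      rw [harmonic]; push_cast
      apply Finset.sum_congr rfl; intro i _; rw [one_div, add_comm]
    push_cast at this ⊢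
    rw [this]; ring
  rw [e]
  refine (norm_add_le _ _).trans ?_
  have h2 := norm_sum_le (Finset.range (n+1)) (fun j : ℕ => (1 / ((1:ℂ) + j) - 1 / (s + j)))
  have h3 : ‖((Real.log n - harmonic (n+1) : ℝ) : ℂ)‖ ≤ 2 := by
    rw [Complex.norm_real, Real.norm_eq_abs, abs_le]
    have a1 := log_add_one_le_harmonic (n+1)
    have a2 := harmonic_le_one_add_log (n+1)
    push_cast at a1 a2 ⊢
    have a3 : Real.log n ≤ Real.log (n + 1 + 1) := Real.log_le_log (by linarith) (by linarith)
    have a4 : Real.log (n + 1) ≤ Real.log n + 1 := by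
      have : Real.log ((n + 1) / n) ≤ (n+1)/n - 1 := Real.log_le_sub_one_of_pos (by positivity)
      rw [Real.log_div (by positivity) (by positivity)] at this
      have : ((n:ℝ) + 1) / n - 1 ≤ 1 := by
        rw [add_div, div_self (by positivity)]
        have : 1 / (n:ℝ) ≤ 1 := by rw [div_le_one (by linarith)]; exact hn'
        linarith
      linarith
    constructor <;> linarith
  have h5 : Real.log 2 ≤ Real.log (2 + ‖s‖) := Real.log_le_log (by norm_num) (by linarith [norm_nonneg s])
  have := Real.log_two_gt_d9
  linarith

end VK

namespace VK
open Complex Set Topology MeasureTheory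

/-- The entire function `s(s-1)Λ(s)`. -/
def X (s : ℂ) : ℂ := 1 + s * (s - 1) * completedRiemannZeta₀ s

lemma X_differentiable : Differentiable ℂ X := by
  have := differentiable_completedZeta₀
  unfold X
  fun_prop

lemma X_one_sub (s : ℂ) : X (1 - s) = X s := by
  unfold X
  rw [completedRiemannZeta₀_one_sub]
  ring

lemma X_eq {s : ℂ} (h0 : 0 < s.re) (h1 : s ≠ 1) :
    X s = s * (s - 1) * (Gammaℝ s * riemannZeta s) := by
  have hs : s ≠ 0 := by rintro rfl; simp at h0
  have hG := Gammaℝ_ne_zero_of_re_pos h0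
  rw [riemannZeta_def_of_ne_zero hs, mul_div_cancel₀ _ hG, completedRiemannZeta_eq]
  have h2 : 1 - s ≠ 0 := sub_ne_zero.mpr (Ne.symm h1)
  unfold X
  field_simp
  ring

lemma X_one : X 1 = 1 := by simp [X]

lemma X_ne_zero (hRH : RiemannHypothesis) {s : ℂ} (hs : 1/2 < s.re) : X s ≠ 0 := by
  by_cases h1 : s = 1
  · rw [h1, X_one]; exact one_ne_zero
  have h0 : 0 < s.re := by linarith
  rw [X_eq h0 h1]
  have hs0 : s ≠ 0 := by rintro rfl; simp at h0
  refine mul_ne_zero (mul_ne_zero hs0 (sub_ne_zero.mpr h1))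
    (mul_ne_zero (Gammaℝ_ne_zero_of_re_pos h0) ?_)
  intro hz
  have := hRH s hz ?_ h1
  · linarith
  · rintro ⟨n, rfl⟩
    have : (-2 * ((n : ℂ) + 1)).re = -2 * ((n : ℝ) + 1) := by simp
    rw [this] at h0
    have : (0 : ℝ) ≤ n := n.cast_nonneg
    linarith

lemma Gammaℝ_conj (s : ℂ) : Gammaℝ ((starRingEnd ℂ) s) = (starRingEnd ℂ) (Gammaℝ s) := by
  rw [Gammaℝ_def, Gammaℝ_def, map_mul, ← Complex.Gamma_conj]
  congr 1
  · rw [Complex.cpow_def_of_ne_zero (by exact_mod_cast Real.pi_ne_zero),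
      Complex.cpow_def_of_ne_zero (by exact_mod_cast Real.pi_ne_zero), ← Complex.exp_conj]
    congr 1
    rw [← Complex.ofReal_log Real.pi_pos.le]
    simp [Complex.conj_ofNat]
  · simp [Complex.conj_ofNat]

lemma X_conj {s : ℂ} (h0 : 0 < s.re) (h1 : s ≠ 1) :
    X ((starRingEnd ℂ) s) = (starRingEnd ℂ) (X s) := by
  rw [X_eq h0 h1, X_eq (by simpa using h0)
    (by intro h; apply h1; have := congrArg (starRingEnd ℂ) h; simpa using this)]
  simp [Gammaℝ_conj, riemannZeta_conj]

/-- the archimedean part -/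
def D (s : ℂ) : ℂ := 1 / s - (Real.log π : ℂ) / 2 + logDeriv Complex.Gamma (s / 2) / 2

lemma Gammaℝ_logDeriv {s : ℂ} (hs : 0 < s.re) :
    logDeriv Gammaℝ s = - (Real.log π : ℂ) / 2 + logDeriv Complex.Gamma (s / 2) / 2 := by
  have hfun : Gammaℝ = fun s : ℂ => ((π : ℂ) ^ (-s / 2)) * (Complex.Gamma ∘ (fun s : ℂ => s / 2)) s := by
    ext s; rw [Gammaℝ_def]; rfl
  have hpi : (π : ℂ) ≠ 0 := by exact_mod_cast Real.pi_ne_zero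
  have hs2 : 0 < (s / 2).re := by
    have : (s / 2).re = s.re / 2 := by simp
    rw [this]; linarith
  have hGd : DifferentiableAt ℂ Complex.Gamma (s / 2) := by
    apply Complex.differentiableAt_Gamma
    intro m h
    rw [h] at hs2
    simp at hs2
    have : (0 : ℝ) ≤ m := m.cast_nonneg
    linarith
  have hd2 : HasDerivAt (fun s : ℂ => s / 2) (1 / 2) s := (hasDerivAt_id s).div_const 2
  have hcp : HasDerivAt (fun s : ℂ => (π : ℂ) ^ (-s / 2))
      ((π : ℂ) ^ (-s / 2) * Complex.log π * (-1 / 2)) s := by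
    have := ((hasDerivAt_id s).neg.div_const 2).const_cpow (c := (π : ℂ)) (Or.inl hpi)
    simpa using this
  rw [hfun, logDeriv_mul s (by simp [Complex.cpow_eq_zero_iff, hpi])
    (by simpa using Complex.Gamma_ne_zero_of_re_pos hs2) hcp.differentiableAt
    (hGd.comp s hd2.differentiableAt), logDeriv_comp (g := fun s : ℂ => s / 2) hGd hd2.differentiableAt, hd2.deriv,
    logDeriv_apply, hcp.deriv, Complex.ofReal_log Real.pi_pos.le]
  have : (π : ℂ) ^ (-s / 2) ≠ 0 := by simp [Complex.cpow_eq_zero_iff, hpi]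
  field_simp

/-- L-series of von Mangoldt -/
def LΛ (s : ℂ) : ℂ := LSeries (fun n => ↑(ArithmeticFunction.vonMangoldt n)) s

lemma logDeriv_X {s : ℂ} (hs : 1 < s.re) : logDeriv X s = D s + 1 / (s - 1) - LΛ s := by
  have h0 : s ≠ 0 := by rintro rfl; simp at hs; linarith
  have h1 : s ≠ 1 := by rintro rfl; simp at hs
  have hev : X =ᶠ[𝓝 s] fun s => (s * (s - 1)) * (Gammaℝ s * riemannZeta s) := by
    have : {s : ℂ | 1 < s.re} ∈ 𝓝 s :=
      (isOpen_lt continuous_const Complex.continuous_re).mem_nhds hs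
    filter_upwards [this] with z hz
    change 1 < z.re at hz
    exact X_eq (by linarith) (by rintro rfl; simp at hz)
  have hG : DifferentiableAt ℂ Gammaℝ s := by
    have := Complex.differentiable_Gammaℝ_inv s
    have h2 := this.inv (inv_ne_zero (Gammaℝ_ne_zero_of_re_pos (by linarith)))
    have h3 : (fun s => (Gammaℝ s)⁻¹)⁻¹ = Gammaℝ := by ext z; simp
    rwa [h3] at h2
  have hz := differentiableAt_riemannZeta h1
  have hz0 := riemannZeta_ne_zero_of_one_lt_re hs
  have hG0 : Gammaℝ s ≠ 0 := Gammaℝ_ne_zero_of_re_pos (by linarith)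
  rw [logDeriv_apply, hev.deriv_eq, hev.eq_of_nhds, ← logDeriv_apply,
    logDeriv_mul (f := fun s : ℂ => s * (s - 1)) (g := fun s => Gammaℝ s * riemannZeta s) s (mul_ne_zero h0 (sub_ne_zero.mpr h1)) (mul_ne_zero hG0 hz0) (by fun_prop)
      (hG.mul hz), logDeriv_mul (f := fun s : ℂ => s) (g := fun s : ℂ => s - 1) s h0 (sub_ne_zero.mpr h1) (by fun_prop) (by fun_prop),
      logDeriv_mul s hG0 hz0 hG hz, Gammaℝ_logDeriv (by linarith)]
  unfold LΛ
  rw [ArithmeticFunction.LSeries_vonMangoldt_eq_deriv_riemannZeta_div hs]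
  have e1 : logDeriv (fun z : ℂ => z) s = 1 / s := by simp [logDeriv_apply]
  have e2 : logDeriv (fun z : ℂ => z - 1) s = 1 / (s - 1) := by simp [logDeriv_apply]
  rw [e1, e2, D, logDeriv_apply riemannZeta]
  ring

lemma norm_D_le {s : ℂ} (hs : 1/2 ≤ s.re) : ‖D s‖ ≤ 14 * Real.log (2 + ‖s‖) := by
  have hre : s.re ≤ ‖s‖ := Complex.re_le_norm s
  have h1 : ‖(1 : ℂ) / s‖ ≤ 2 := by
    rw [norm_div, norm_one, div_le_iff₀ (by linarith)]; linarith
  have hlp : 0 ≤ Real.log π := Real.log_nonneg (by linarith [Real.pi_gt_three])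
  have hlp2 : Real.log π ≤ 2 * Real.log 2 := by
    have : Real.log π ≤ Real.log ((2:ℝ)^2) :=
      Real.log_le_log Real.pi_pos (by linarith [Real.pi_lt_four])
    rw [Real.log_pow] at this; exact_mod_cast this
  have h2 : ‖(Real.log π : ℂ) / 2‖ ≤ Real.log 2 := by
    rw [norm_div, Complex.norm_real, Real.norm_of_nonneg hlp]
    simp; linarith
  have h3 : ‖logDeriv Complex.Gamma (s / 2) / 2‖ ≤ 17 * Real.log (2 + ‖s‖) / 2 := by
    rw [norm_div]
    have : ‖logDeriv Complex.Gamma (s / 2)‖ ≤ 17 * Real.log (2 + ‖s / 2‖) := by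
      apply norm_digamma_le
      have : (s / 2).re = s.re / 2 := by simp
      rw [this]; linarith
    have h4 : ‖s / 2‖ ≤ ‖s‖ := by
      rw [norm_div]; simp
    have h5 : Real.log (2 + ‖s / 2‖) ≤ Real.log (2 + ‖s‖) :=
      Real.log_le_log (by positivity) (by linarith)
    simp
    linarith
  have h6 : Real.log 2 ≤ Real.log (2 + ‖s‖) :=
    Real.log_le_log (by norm_num) (by linarith [norm_nonneg s])
  have h7 := Real.log_two_gt_d9
  have : ‖D s‖ ≤ ‖(1 : ℂ) / s‖ + ‖(Real.log π : ℂ) / 2‖ + ‖logDeriv Complex.Gamma (s / 2) / 2‖ := by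
    unfold D
    exact (norm_add_le _ _).trans (by gcongr; exact norm_sub_le _ _)
  linarith

lemma norm_LΛ_le : ∃ K : ℝ, 0 < K ∧ ∀ s : ℂ, 2 ≤ s.re → ‖LΛ s‖ ≤ K := by
  have hS := (ArithmeticFunction.LSeriesSummable_vonMangoldt (s := 2) (by norm_num)).norm
  refine ⟨(∑' n, ‖LSeries.term (fun n => ↑(ArithmeticFunction.vonMangoldt n)) 2 n‖) + 1,
    by positivity, fun s hs => ?_⟩
  have : ‖LΛ s‖ ≤ ∑' n, ‖LSeries.term (fun n => ↑(ArithmeticFunction.vonMangoldt n)) 2 n‖ :=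
    tsum_of_norm_bounded hS.hasSum fun n => LSeries.norm_term_le_of_re_le_re _ (by simpa using hs) n
  linarith

lemma norm_logDeriv_X_le : ∃ K : ℝ, 0 < K ∧ ∀ s : ℂ, 2 ≤ s.re →
    ‖logDeriv X s‖ ≤ K * Real.log (2 + ‖s‖) := by
  obtain ⟨K, hK, h⟩ := norm_LΛ_le
  refine ⟨14 + 2 * (K + 1), by positivity, fun s hs => ?_⟩
  rw [logDeriv_X (by linarith)]
  have h1 := norm_D_le (s := s) (by linarith)
  have h2 : ‖1 / (s - 1)‖ ≤ 1 := by
    have : (s - 1).re ≤ ‖s - 1‖ := Complex.re_le_norm _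
    simp only [sub_re, one_re] at this
    rw [norm_div, norm_one, div_le_iff₀ (by linarith)]; linarith
  have h3 := h s hs
  have h6 : Real.log 2 ≤ Real.log (2 + ‖s‖) :=
    Real.log_le_log (by norm_num) (by linarith [norm_nonneg s])
  have h7 := Real.log_two_gt_d9
  have h8 : ‖D s + 1 / (s - 1) - LΛ s‖ ≤ ‖D s‖ + ‖1 / (s - 1)‖ + ‖LΛ s‖ :=
    (norm_sub_le _ _).trans (by gcongr; exact norm_add_le _ _)
  nlinarith

lemma norm_completed₀_le : ∃ K : ℝ, 0 < K ∧ ∀ s : ℂ, 0 ≤ s.re → s.re ≤ 2 →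
    ‖completedRiemannZeta₀ s‖ ≤ K := by
  set P := HurwitzZeta.hurwitzEvenFEPair 0
  have hM (s : ℂ) : MellinConvergent P.f_modif s :=
    (P.isStrongFEPair_toStrongFEPair.hasMellin s).1
  have hi0 := (hM 0).norm
  have hi2 := (hM 1).norm
  refine ⟨(∫ t in Ioi (0:ℝ), (‖(t : ℂ) ^ ((0:ℂ) - 1) • P.f_modif t‖ +
    ‖(t : ℂ) ^ ((1:ℂ) - 1) • P.f_modif t‖)) + 1, by positivity, fun s h0 h2 => ?_⟩
  have hE : completedRiemannZeta₀ s = (mellin P.f_modif (s / 2)) / 2 := rfl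
  have hb : ‖mellin P.f_modif (s / 2)‖ ≤ ∫ t in Ioi (0:ℝ),
      (‖(t : ℂ) ^ ((0:ℂ) - 1) • P.f_modif t‖ + ‖(t : ℂ) ^ ((1:ℂ) - 1) • P.f_modif t‖) := by
    unfold mellin
    refine MeasureTheory.norm_integral_le_of_norm_le (hi0.add hi2) ?_
    filter_upwards [ae_restrict_mem measurableSet_Ioi] with t ht
    simp only [Set.mem_Ioi] at ht
    rw [norm_smul, norm_smul, norm_smul, ← add_mul]
    gcongr
    rw [Complex.norm_cpow_eq_rpow_re_of_pos ht, Complex.norm_cpow_eq_rpow_re_of_pos ht,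
      Complex.norm_cpow_eq_rpow_re_of_pos ht]
    have hre : (s / 2 - 1).re = s.re / 2 - 1 := by simp
    have e0 : ((0:ℂ) - 1).re = -1 := by simp
    have e1 : ((1:ℂ) - 1).re = 0 := by simp
    rw [hre, e0, e1]
    rcases le_total t 1 with h | h
    · exact (Real.rpow_le_rpow_of_exponent_ge ht h (by linarith)).trans
        (le_add_of_nonneg_right (Real.rpow_nonneg ht.le _))
    · exact (Real.rpow_le_rpow_of_exponent_le h (by linarith)).trans
        (le_add_of_nonneg_left (Real.rpow_nonneg ht.le _))
  rw [hE, norm_div]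
  simp only [Complex.norm_ofNat]
  linarith [norm_nonneg (mellin P.f_modif (s / 2))]

end VK

namespace VK
open Complex Set Topology MeasureTheory

lemma X_gronwall {z w : ℂ} {K : ℝ}
    (hK : ∀ r ∈ Icc (0:ℝ) 1, X (z + r * (w - z)) ≠ 0 ∧ ‖logDeriv X (z + r * (w - z))‖ ≤ K) :
    ‖X w‖ ≤ ‖X z‖ * Real.exp (K * ‖w - z‖) := by
  have hd (r : ℝ) : HasDerivAt (fun r : ℝ => X (z + r * (w - z)))
      (deriv X (z + r * (w - z)) * (w - z)) r := by
    have h1 : HasDerivAt X (deriv X (z + r * (w - z))) (z + r * (w - z)) :=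
      (X_differentiable _).hasDerivAt
    have h2 : HasDerivAt (fun r : ℂ => z + r * (w - z)) (w - z) (r : ℂ) := by
      simpa using ((hasDerivAt_id (r : ℂ)).mul_const (w - z)).const_add z
    exact (h1.comp (r : ℂ) h2).comp_ofReal
  have := norm_le_gronwallBound_of_norm_deriv_right_le (f := fun r : ℝ => X (z + r * (w - z)))
    (f' := fun r : ℝ => deriv X (z + r * (w - z)) * (w - z)) (δ := ‖X z‖) (K := K * ‖w - z‖)
    (ε := 0) (a := 0) (b := 1)
    (fun r _ => (hd r).continuousAt.continuousWithinAt) (fun r _ => (hd r).hasDerivWithinAt)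
    (by simp) ?_ 1 (by simp)
  · rw [gronwallBound_ε0] at this
    simpa using this
  · intro r hr
    obtain ⟨h0, hb⟩ := hK r ⟨hr.1, hr.2.le⟩
    rw [logDeriv_apply, norm_div, div_le_iff₀ (norm_pos_iff.mpr h0)] at hb
    rw [norm_mul, add_zero]
    calc _ ≤ K * ‖X (z + r * (w - z))‖ * ‖w - z‖ := by gcongr
      _ = _ := by ring

lemma X_compare (hRH : RiemannHypothesis) : ∃ K : ℝ, 0 < K ∧ ∀ z w : ℂ, 2 ≤ z.re → 2 ≤ w.re →
    ‖X w‖ ≤ ‖X z‖ * Real.exp (K * Real.log (2 + (‖z‖ + ‖w‖)) * ‖w - z‖) := by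
  obtain ⟨K, hK, h⟩ := norm_logDeriv_X_le
  refine ⟨K, hK, fun z w hz hw => X_gronwall fun r hr => ?_⟩
  have hre : 2 ≤ (z + r * (w - z)).re := by
    simp only [add_re, mul_re, ofReal_re, sub_re, ofReal_im]
    nlinarith [hr.1, hr.2]
  refine ⟨X_ne_zero hRH (by linarith), (h _ hre).trans ?_⟩
  have : ‖z + r * (w - z)‖ ≤ ‖z‖ + ‖w‖ := by
    have e : z + r * (w - z) = ((1 - r : ℝ) : ℂ) * z + (r : ℂ) * w := by push_cast; ring
    rw [e]
    refine (norm_add_le _ _).trans ?_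
    rw [norm_mul, norm_mul, Complex.norm_real, Complex.norm_real,
      Real.norm_of_nonneg (by linarith [hr.2]), Real.norm_of_nonneg hr.1]
    nlinarith [hr.1, hr.2, norm_nonneg z, norm_nonneg w]
  gcongr

lemma mul_log_le {W : ℝ} (hW : 1 ≤ W) : W * Real.log W ≤ 2 * W ^ (3/2 : ℝ) := by
  have h := Real.log_le_rpow_div (x := W) (by linarith) (ε := 1/2) (by norm_num)
  have e : W ^ (3/2 : ℝ) = W * W ^ (1/2 : ℝ) := by
    rw [← Real.rpow_one_add' (by linarith) (by norm_num)]; norm_num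
  rw [e]
  nlinarith

lemma X_bounds_two (hRH : RiemannHypothesis) : ∃ C : ℝ, 0 < C ∧ ∀ s : ℂ, 2 ≤ s.re →
    ‖X s‖ ≤ Real.exp (C * (4 + ‖s‖) ^ (3/2 : ℝ)) ∧
    Real.exp (- (C * (4 + ‖s‖) ^ (3/2 : ℝ))) ≤ ‖X s‖ := by
  obtain ⟨K, hK, h⟩ := X_compare hRH
  have hX2 : 0 < ‖X 2‖ := norm_pos_iff.mpr (X_ne_zero hRH (by norm_num))
  refine ⟨2 * K + |Real.log ‖X 2‖|, by positivity, fun s hs => ?_⟩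
  have hW1 : 1 ≤ 4 + ‖s‖ := by linarith [norm_nonneg s]
  have hW : 1 ≤ (4 + ‖s‖) ^ (3/2 : ℝ) := Real.one_le_rpow hW1 (by norm_num)
  have hml := mul_log_le hW1
  have hl0 : 0 ≤ Real.log (4 + ‖s‖) := Real.log_nonneg hW1
  have hlog := abs_le.mp (le_refl |Real.log ‖X 2‖|)
  have ha := abs_nonneg (Real.log ‖X 2‖)
  have key : ∀ d : ℝ, d ≤ 4 + ‖s‖ → K * Real.log (4 + ‖s‖) * d ≤ 2 * K * (4 + ‖s‖) ^ (3/2 : ℝ) := by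
    intro d hd
    calc K * Real.log (4 + ‖s‖) * d ≤ K * Real.log (4 + ‖s‖) * (4 + ‖s‖) := by gcongr
      _ = K * ((4 + ‖s‖) * Real.log (4 + ‖s‖)) := by ring
      _ ≤ K * (2 * (4 + ‖s‖) ^ (3/2 : ℝ)) := by gcongr
      _ = _ := by ring
  have n2 : ‖(2:ℂ)‖ = 2 := by simp
  constructor
  · have h1 := h 2 s (by simp) hs
    have hd : ‖s - 2‖ ≤ 4 + ‖s‖ := (norm_sub_le _ _).trans (by rw [n2]; linarith)
    rw [n2, show 2 + (2 + ‖s‖) = 4 + ‖s‖ by ring] at h1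
    refine h1.trans ?_
    rw [← Real.exp_log hX2, ← Real.exp_add, Real.exp_log hX2]
    apply Real.exp_le_exp.mpr
    have := key _ hd
    nlinarith
  · have h1 := h s 2 hs (by simp)
    have hd : ‖2 - s‖ ≤ 4 + ‖s‖ := (norm_sub_le _ _).trans (by rw [n2]; linarith)
    rw [n2, show 2 + (‖s‖ + 2) = 4 + ‖s‖ by ring] at h1
    have := key _ hd
    have h2 : ‖X 2‖ ≤ ‖X s‖ * Real.exp (2 * K * (4 + ‖s‖) ^ (3/2 : ℝ)) :=
      h1.trans (by gcongr)
    rw [Real.exp_neg, inv_le_iff_one_le_mul₀ (Real.exp_pos _)]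
    have h3 : 1 ≤ ‖X 2‖ * Real.exp (|Real.log ‖X 2‖| * (4 + ‖s‖) ^ (3/2 : ℝ)) := by
      rw [← Real.exp_log hX2, ← Real.exp_add, Real.exp_log hX2]
      apply Real.one_le_exp
      nlinarith
    refine h3.trans ?_
    rw [add_mul, Real.exp_add, ← mul_assoc]
    gcongr

lemma X_upper (hRH : RiemannHypothesis) : ∃ C : ℝ, 0 < C ∧ ∀ s : ℂ, 0 ≤ s.re →
    ‖X s‖ ≤ Real.exp (C * (4 + ‖s‖) ^ (3/2 : ℝ)) := by
  obtain ⟨C, hC, h⟩ := X_bounds_two hRH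
  obtain ⟨K, hK, h'⟩ := norm_completed₀_le
  refine ⟨C + (2 + K), by positivity, fun s hs => ?_⟩
  have hW1 : 1 ≤ 4 + ‖s‖ := by linarith [norm_nonneg s]
  have hW : 1 ≤ (4 + ‖s‖) ^ (3/2 : ℝ) := Real.one_le_rpow hW1 (by norm_num)
  rcases le_total 2 s.re with h2 | h2
  · refine (h s h2).1.trans (Real.exp_le_exp.mpr ?_)
    nlinarith
  · have h3 := h' s hs h2
    have h4 : ‖X s‖ ≤ 1 + ‖s‖ * (‖s‖ + 1) * K := by
      unfold X
      refine (norm_add_le _ _).trans ?_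
      rw [norm_one, norm_mul, norm_mul]
      have : ‖s - 1‖ ≤ ‖s‖ + 1 := (norm_sub_le _ _).trans (by simp)
      gcongr
    have h5 : (4 + ‖s‖) ≤ (4 + ‖s‖) ^ (3/2 : ℝ) := by
      conv_lhs => rw [← Real.rpow_one (4 + ‖s‖)]
      exact Real.rpow_le_rpow_of_exponent_le hW1 (by norm_num)
    have h6 : 1 + ‖s‖ * (‖s‖ + 1) * K ≤ (4 + ‖s‖) ^ 2 * (1 + K) := by
      nlinarith [norm_nonneg s, mul_nonneg (norm_nonneg s) hK.le]
    have h7 : (4 + ‖s‖) ^ 2 ≤ Real.exp (2 * (4 + ‖s‖)) := by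
      rw [two_mul, Real.exp_add, sq]
      have := Real.add_one_le_exp (4 + ‖s‖)
      have h8 : 4 + ‖s‖ ≤ Real.exp (4 + ‖s‖) := by linarith
      gcongr
    have h8 : 1 + K ≤ Real.exp K := by linarith [Real.add_one_le_exp K]
    calc ‖X s‖ ≤ (4 + ‖s‖) ^ 2 * (1 + K) := h4.trans h6
      _ ≤ Real.exp (2 * (4 + ‖s‖)) * Real.exp K := by gcongr
      _ = Real.exp (2 * (4 + ‖s‖) + K) := by rw [Real.exp_add]
      _ ≤ _ := by
        apply Real.exp_le_exp.mpr
        nlinarith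

lemma X_lower (hRH : RiemannHypothesis) {h : ℝ} (hh : 0 < h) : ∃ C : ℝ, 0 < C ∧ ∀ s : ℂ,
    1/2 + h ≤ s.re → Real.exp (- (C * (8 + ‖s‖) ^ (3/2 : ℝ))) ≤ ‖X s‖ := by
  obtain ⟨C₁, hC₁, hl⟩ := X_bounds_two hRH
  obtain ⟨C₂, hC₂, hu⟩ := X_upper hRH
  refine ⟨C₁ + 3 * (C₁ + C₂) / h, by positivity, fun s hs => ?_⟩
  set U := (8 + ‖s‖) ^ (3/2 : ℝ) with hU
  have hU0 : 0 < U := by positivity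
  rcases le_total 2 s.re with h2 | h2
  · refine le_trans (Real.exp_le_exp.mpr ?_) (hl s h2).2
    have : (4 + ‖s‖) ^ (3/2 : ℝ) ≤ U := by rw [hU]; gcongr; norm_num
    have : 0 ≤ 3 * (C₁ + C₂) / h := by positivity
    nlinarith
  set c : ℂ := s + ((2 - s.re : ℝ) : ℂ) with hc
  have hcre : c.re = 2 := by simp [hc]
  have hcs : ‖s - c‖ = 2 - s.re := by
    rw [hc, sub_add_cancel_left, norm_neg, Complex.norm_real, Real.norm_of_nonneg (by linarith)]
  have hcn : ‖c‖ ≤ ‖s‖ + 3/2 := by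
    have : ‖c‖ ≤ ‖s‖ + ‖c - s‖ := by
      calc ‖c‖ = ‖s + (c - s)‖ := by ring_nf
        _ ≤ _ := norm_add_le _ _
    rw [norm_sub_rev, hcs] at this
    linarith
  have hball (z : ℂ) (hz : z ∈ Metric.ball c (3/2)) : 1/2 < z.re ∧ ‖z‖ ≤ ‖s‖ + 3 := by
    rw [Metric.mem_ball, dist_eq_norm] at hz
    have h1 : |(z - c).re| ≤ ‖z - c‖ := Complex.abs_re_le_norm _
    rw [sub_re, hcre] at h1
    have h1 := abs_le.mp h1
    have h3 : ‖z‖ ≤ ‖c‖ + ‖z - c‖ := by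
      calc ‖z‖ = ‖c + (z - c)‖ := by ring_nf
        _ ≤ _ := norm_add_le _ _
    constructor <;> linarith
  have hlow : Real.exp (-(C₁ * U)) ≤ ‖X c‖ := by
    refine le_trans (Real.exp_le_exp.mpr ?_) (hl c hcre.ge).2
    have : (4 + ‖c‖) ^ (3/2 : ℝ) ≤ U := by rw [hU]; gcongr ?_ ^ _; linarith
    nlinarith
  have hdl : DifferentiableOn ℂ (logDeriv X) (Metric.ball c (3/2)) := by
    intro z hz
    have h1 := X_ne_zero hRH (hball z hz).1
    have h2 : DifferentiableAt ℂ (deriv X) z :=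
      (X_differentiable.analyticAt z).deriv.differentiableAt
    exact (h2.div (X_differentiable z) h1).differentiableWithinAt
  obtain ⟨g, hgc, hg⟩ := hdl.isExactOn_ball.with_val_at c 0
  have hcball : c ∈ Metric.ball c (3/2 : ℝ) := Metric.mem_ball_self (by norm_num)
  have hXg (z : ℂ) (hz : z ∈ Metric.ball c (3/2)) : X z = X c * Complex.exp (g z) := by
    have hder : ∀ w ∈ Metric.ball c (3/2 : ℝ),
        HasDerivAt (fun w => X w * Complex.exp (- g w)) 0 w := by
      intro w hw
      have h1 := X_ne_zero hRH (hball w hw).1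
      have h3 := ((X_differentiable w).hasDerivAt).mul (hg w hw).neg.cexp
      have h4 : deriv X w * Complex.exp ((-g) w) +
          X w * (Complex.exp ((-g) w) * -logDeriv X w) = 0 := by
        rw [logDeriv_apply]
        field_simp
        ring
      rw [h4] at h3
      exact h3
    have := (convex_ball c (3/2)).is_const_of_fderivWithin_eq_zero (𝕜 := ℂ)
      (f := fun w => X w * Complex.exp (- g w))
      (fun w hw => (hder w hw).differentiableAt.differentiableWithinAt) (fun w hw => by
        rw [fderivWithin_of_isOpen Metric.isOpen_ball hw]
        have := (hder w hw).hasFDerivAt.fderiv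
        rw [this]; ext; simp) hz hcball
    simp only [hgc, neg_zero, Complex.exp_zero, mul_one] at this
    rw [← this, mul_assoc, ← Complex.exp_add]
    simp
  have hXc0 : X c ≠ 0 := X_ne_zero hRH (hball c hcball).1
  have hreg (z : ℂ) (hz : z ∈ Metric.ball c (3/2)) : (g z).re ≤ (C₁ + C₂) * U := by
    have h1 := hu z (by linarith [(hball z hz).1])
    have h2 : (4 + ‖z‖) ^ (3/2 : ℝ) ≤ U := by
      rw [hU]; gcongr ?_ ^ _; linarith [(hball z hz).2]
    rw [hXg z hz, norm_mul, Complex.norm_exp] at h1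
    have h3 : Real.exp (-(C₁ * U)) * Real.exp (g z).re ≤ Real.exp (C₂ * U) := by
      calc _ ≤ ‖X c‖ * Real.exp (g z).re := by gcongr
        _ ≤ _ := h1.trans (Real.exp_le_exp.mpr (by gcongr))
    rw [← Real.exp_add, Real.exp_le_exp] at h3
    linarith
  have hsball : s ∈ Metric.ball c (3/2) := by
    rw [Metric.mem_ball, dist_eq_norm, hcs]; linarith
  have hBC := Complex.borelCaratheodory_zero (f := fun w => g (c + w)) (M := (C₁ + C₂) * U)
    (R := 3/2) (z := s - c) (by positivity)
    (fun w hw => by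
      have : c + w ∈ Metric.ball c (3/2 : ℝ) := by simpa [Metric.mem_ball, dist_eq_norm] using hw
      exact ((hg _ this).comp_const_add c w).differentiableAt.differentiableWithinAt)
    (fun w hw => by
      have : c + w ∈ Metric.ball c (3/2 : ℝ) := by simpa [Metric.mem_ball, dist_eq_norm] using hw
      exact hreg _ this) (by norm_num)
    (by simpa [Metric.mem_ball, dist_eq_norm] using hsball) (by simpa using hgc)
  simp only [add_sub_cancel, hcs] at hBC
  have hb2 : 2 * ((C₁ + C₂) * U) * (2 - s.re) / (3/2 - (2 - s.re)) ≤ 3 * (C₁ + C₂) / h * U := by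
    have : 2 * ((C₁ + C₂) * U) * (2 - s.re) / (3/2 - (2 - s.re)) ≤
      2 * ((C₁ + C₂) * U) * (3/2) / h := by gcongr <;> linarith
    refine this.trans (le_of_eq ?_); ring
  have hgs : - (3 * (C₁ + C₂) / h * U) ≤ (g s).re := by
    have := abs_le.mp ((Complex.abs_re_le_norm (g s)).trans (hBC.trans hb2))
    exact this.1
  rw [hXg s hsball, norm_mul, Complex.norm_exp]
  calc Real.exp (-((C₁ + 3 * (C₁ + C₂) / h) * U))
      = Real.exp (-(C₁ * U)) * Real.exp (- (3 * (C₁ + C₂) / h * U)) := by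
        rw [← Real.exp_add]; ring_nf
    _ ≤ _ := by gcongr

end VK

namespace VK
open Complex Set Topology MeasureTheory

lemma norm_X_line {h : ℝ} (h0 : 0 < h) (h1 : h < 1/4) (y : ℝ) :
    ‖X (1/2 + y * I - h)‖ = ‖X (1/2 + y * I + h)‖ := by
  have hre : (1/2 + y * I + h : ℂ).re = 1/2 + h := by simp
  have e : (1/2 + y * I - h : ℂ) = 1 - (starRingEnd ℂ) (1/2 + y * I + h) := by
    simp [Complex.conj_ofNat]
    ring
  rw [e, X_one_sub, X_conj (by rw [hre]; linarith)
    (by intro h; rw [h] at hre; simp at hre; linarith)]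
  simp

lemma X_sub_le (hRH : RiemannHypothesis) {h : ℝ} (h0 : 0 < h) (h1 : h < 1/4) {z : ℂ}
    (hz : 0 ≤ z.re) : ‖X (1/2 + z - h)‖ ≤ ‖X (1/2 + z + h)‖ := by
  obtain ⟨K₀, hK₀, hcomp⟩ := X_compare hRH
  obtain ⟨C₁, hC₁, hlow⟩ := X_lower hRH h0
  obtain ⟨C₂, hC₂, hup⟩ := X_upper hRH
  obtain ⟨K, hK⟩ := exists_nat_ge K₀
  have hre1 (z : ℂ) : (1/2 + z - h : ℂ).re = 1/2 + z.re - h := by simp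
  have hre2 (z : ℂ) : (1/2 + z + h : ℂ).re = 1/2 + z.re + h := by simp
  have hne (z : ℂ) (hz : 0 ≤ z.re) : X (1/2 + z + h) ≠ 0 :=
    X_ne_zero hRH (by rw [hre2]; linarith)
  set F : ℂ → ℂ := fun z => X (1/2 + z - h) / X (1/2 + z + h) with hF
  have hnormge (ε : ℝ) (hε : 0 < ε) (z : ℂ) (hz : 0 ≤ z.re) : 1 ≤ ‖1 + ε * z‖ := by
    have : (1 + ε * z).re ≤ ‖1 + ε * z‖ := Complex.re_le_norm _
    simp at this
    nlinarith [mul_nonneg hε.le hz]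
  have main (ε : ℝ) (hε : 0 < ε) : ‖F z / (1 + ε * z) ^ K‖ ≤ 1 := by
    refine PhragmenLindelof.right_half_plane_of_bounded_on_real
      (f := fun z => F z / (1 + ε * z) ^ K) ?_ ?_ ?_ ?_ hz
    · apply DifferentiableOn.diffContOnCl
      have hcl : closure {z : ℂ | 0 < z.re} ⊆ {z : ℂ | 0 ≤ z.re} :=
        closure_lt_subset_le continuous_const Complex.continuous_re
      intro w hw
      have hw' : 0 ≤ w.re := hcl hw
      have hpne : (1 + ε * w) ^ K ≠ 0 := by
        apply pow_ne_zero
        intro h; have := hnormge ε hε w hw'; rw [h] at this; simp at this; linarith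
      have hX := X_differentiable
      apply DifferentiableAt.differentiableWithinAt
      have d1 : DifferentiableAt ℂ (fun z : ℂ => X (1/2 + z - h)) w :=
        (hX _).comp w (by fun_prop)
      have d2 : DifferentiableAt ℂ (fun z : ℂ => X (1/2 + z + h)) w :=
        (hX _).comp w (by fun_prop)
      exact (d1.div d2 (hne w hw')).div (by fun_prop) hpne
    · refine ⟨3/2, by norm_num, (C₁ + C₂) * 10 ^ (3/2 : ℝ), ?_⟩
      apply Asymptotics.IsBigO.of_bound 1
      rw [Filter.eventually_inf_principal]
      have hev : ∀ᶠ z in Bornology.cobounded ℂ, 1 ≤ ‖z‖ :=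
        tendsto_norm_cobounded_atTop.eventually_ge_atTop 1
      filter_upwards [hev] with w hw hw0
      have hw0 : 0 ≤ w.re := le_of_lt hw0
      have n1 : ‖(1/2 + w - h : ℂ)‖ ≤ ‖w‖ + 1 := by
        have e : (1/2 + w - h : ℂ) = w + ((1/2 - h : ℝ) : ℂ) := by push_cast; ring
        rw [e]; refine (norm_add_le _ _).trans ?_
        rw [Complex.norm_real, Real.norm_of_nonneg (by linarith)]; linarith
      have n2 : ‖(1/2 + w + h : ℂ)‖ ≤ ‖w‖ + 1 := by
        have e : (1/2 + w + h : ℂ) = w + ((1/2 + h : ℝ) : ℂ) := by push_cast; ring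
        rw [e]; refine (norm_add_le _ _).trans ?_
        rw [Complex.norm_real, Real.norm_of_nonneg (by linarith)]; linarith
      have b1 := hup (1/2 + w - h) (by rw [hre1]; linarith)
      have b2 := hlow (1/2 + w + h) (by rw [hre2]; linarith)
      have b3 : (4 + ‖(1/2 + w - h : ℂ)‖) ^ (3/2 : ℝ) ≤ 10 ^ (3/2 : ℝ) * ‖w‖ ^ (3/2 : ℝ) := by
        rw [← Real.mul_rpow (by norm_num) (norm_nonneg w)]
        gcongr ?_ ^ _; linarith
      have b4 : (8 + ‖(1/2 + w + h : ℂ)‖) ^ (3/2 : ℝ) ≤ 10 ^ (3/2 : ℝ) * ‖w‖ ^ (3/2 : ℝ) := by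
        rw [← Real.mul_rpow (by norm_num) (norm_nonneg w)]
        gcongr ?_ ^ _; linarith
      rw [one_mul, Real.norm_of_nonneg (Real.exp_pos _).le, norm_div, norm_div, norm_pow]
      have b5 : 1 ≤ ‖1 + ε * w‖ ^ K := one_le_pow₀ (hnormge ε hε w hw0)
      refine (div_le_self (by positivity) b5).trans ?_
      rw [div_le_iff₀ (norm_pos_iff.mpr (hne w hw0))]
      calc ‖X (1/2 + w - h)‖ ≤ Real.exp (C₂ * (10 ^ (3/2 : ℝ) * ‖w‖ ^ (3/2 : ℝ))) :=
            b1.trans (Real.exp_le_exp.mpr (by gcongr))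
        _ = Real.exp ((C₁ + C₂) * 10 ^ (3/2 : ℝ) * ‖w‖ ^ (3/2 : ℝ)) *
            Real.exp (-(C₁ * (10 ^ (3/2 : ℝ) * ‖w‖ ^ (3/2 : ℝ)))) := by
            rw [← Real.exp_add]; ring_nf
        _ ≤ _ := by
            gcongr
            refine le_trans (Real.exp_le_exp.mpr ?_) b2
            gcongr
    · refine ⟨(3 + 2 / ε) ^ K, ?_⟩
      rw [Filter.eventually_map]
      filter_upwards [Filter.eventually_ge_atTop (2 : ℝ)] with x hx
      have hx0 : 0 ≤ (x : ℂ).re := by simp; linarith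
      have hc := hcomp (1/2 + x + h) (1/2 + x - h) (by rw [hre2]; simp; linarith)
        (by rw [hre1]; simp; linarith)
      have m1 : ‖(1/2 + x + h : ℂ)‖ = 1/2 + x + h := by
        have e : (1/2 + x + h : ℂ) = ((1/2 + x + h : ℝ) : ℂ) := by push_cast; ring
        rw [e, Complex.norm_real, Real.norm_of_nonneg (by linarith)]
      have m2 : ‖(1/2 + x - h : ℂ)‖ = 1/2 + x - h := by
        have e : (1/2 + x - h : ℂ) = ((1/2 + x - h : ℝ) : ℂ) := by push_cast; ring
        rw [e, Complex.norm_real, Real.norm_of_nonneg (by linarith)]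
      have m3 : ‖(1/2 + x - h : ℂ) - (1/2 + x + h)‖ = 2 * h := by
        have e : (1/2 + x - h : ℂ) - (1/2 + x + h) = ((-(2 * h) : ℝ) : ℂ) := by push_cast; ring
        rw [e, Complex.norm_real, norm_neg, Real.norm_of_nonneg (by linarith)]
      rw [m1, m2, m3, show (2 + (1/2 + x + h + (1/2 + x - h)) : ℝ) = 3 + 2 * x by ring] at hc
      have hl : 0 ≤ Real.log (3 + 2 * x) := Real.log_nonneg (by linarith)
      have hc2 : ‖X (1/2 + x - h)‖ ≤ ‖X (1/2 + x + h)‖ * (3 + 2 * x) ^ K := by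
        refine hc.trans ?_
        gcongr
        have : (3 + 2 * x) ^ K = Real.exp (K * Real.log (3 + 2 * x)) := by
          rw [Real.exp_nat_mul, Real.exp_log (by linarith)]
        rw [this]
        apply Real.exp_le_exp.mpr
        calc K₀ * Real.log (3 + 2 * x) * (2 * h) ≤ K₀ * Real.log (3 + 2 * x) * 1 := by
              gcongr; linarith
          _ ≤ _ := by rw [mul_one]; gcongr
      have m4 : ‖(1 + ε * x : ℂ)‖ = 1 + ε * x := by
        have e : (1 + ε * x : ℂ) = ((1 + ε * x : ℝ) : ℂ) := by push_cast; ring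
        rw [e, Complex.norm_real, Real.norm_of_nonneg (by positivity)]
      rw [norm_div, norm_div, norm_pow, m4]
      have hp : 0 < 1 + ε * x := by positivity
      rw [div_le_iff₀ (by positivity), div_le_iff₀ (norm_pos_iff.mpr (hne _ hx0)), mul_comm,
        ← mul_pow]
      refine hc2.trans ?_
      gcongr
      have : (3 + 2 / ε) * (1 + ε * x) = 3 + 2 * x + 3 * ε * x + 2 / ε := by
        field_simp; ring
      rw [this]
      have : 0 ≤ 3 * ε * x + 2 / ε := by positivity
      linarith
    · intro y
      have hy0 : (0:ℝ) ≤ ((y : ℂ) * I).re := by simp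
      rw [norm_div, norm_div, norm_pow, norm_X_line h0 h1 y,
        div_self (norm_pos_iff.mpr (hne _ hy0)).ne']
      exact div_le_one_of_le₀ (one_le_pow₀ (hnormge ε hε _ hy0)) (by positivity)
  have hlim : Tendsto (fun ε : ℝ => ‖F z / (1 + ε * z) ^ K‖) (𝓝[>] 0) (𝓝 ‖F z‖) := by
    have : ContinuousAt (fun ε : ℝ => ‖F z / (1 + ε * z) ^ K‖) 0 := by
      apply ContinuousAt.norm
      apply ContinuousAt.div continuousAt_const
      · fun_prop
      · simp
    have h := this.tendsto.mono_left (nhdsWithin_le_nhds (s := Ioi 0))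
    simpa using h
  have hfin : ‖F z‖ ≤ 1 := le_of_tendsto hlim (by
    filter_upwards [self_mem_nhdsWithin] with ε hε
    exact main ε hε)
  rw [hF] at hfin
  simp only [norm_div] at hfin
  rwa [div_le_one (norm_pos_iff.mpr (hne _ hz))] at hfin

theorem re_logDeriv_X_nonneg (hRH : RiemannHypothesis) {s : ℂ} (hs : 1/2 < s.re) :
    0 ≤ (logDeriv X s).re := by
  have hd (c : ℝ) : HasDerivAt (fun r : ℝ => X (s + r * c)) (deriv X s * c) 0 := by
    have h1 : HasDerivAt X (deriv X s) (s + ((0:ℝ) : ℂ) * c) := by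
      simpa using (X_differentiable s).hasDerivAt
    have h2 : HasDerivAt (fun r : ℂ => s + r * c) (c : ℂ) ((0 : ℝ) : ℂ) := by
      simpa using ((hasDerivAt_id ((0:ℝ) : ℂ)).mul_const (c : ℂ)).const_add s
    exact (HasDerivAt.comp (h := fun r : ℂ => s + r * c) ((0 : ℝ) : ℂ) h1 h2).comp_ofReal
  have h1 := (hd 1).norm_sq.sub (hd (-1)).norm_sq
  have h2 := h1.tendsto_slope_zero_right
  have h3 := ge_of_tendsto (b := 0) h2 (by
    have : Ioo (0:ℝ) (1/4) ∈ 𝓝[>] (0:ℝ) := Ioo_mem_nhdsGT (by norm_num)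
    filter_upwards [this] with h hh
    have := X_sub_le hRH hh.1 hh.2 (z := s - 1/2) (by simp; linarith)
    have e1 : (1/2 + (s - 1/2) - h : ℂ) = s + h * ((-1 : ℝ) : ℂ) := by push_cast; ring
    have e2 : (1/2 + (s - 1/2) + h : ℂ) = s + h * ((1 : ℝ) : ℂ) := by push_cast; ring
    rw [e1, e2] at this
    simp only [Pi.sub_apply, smul_eq_mul, zero_add]
    have h4 := pow_le_pow_left₀ (norm_nonneg _) this 2
    have : 0 ≤ h⁻¹ := inv_nonneg.mpr hh.1.le
    apply mul_nonneg this
    simp only [Complex.ofReal_zero, zero_mul, add_zero, sub_self, sub_zero]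
    linarith)
  simp only [Complex.inner] at h3
  have hX := X_ne_zero hRH hs
  rw [logDeriv_apply, Complex.div_re]
  simp at h3
  have : 0 < normSq (X s) := normSq_pos.mpr hX
  rw [← add_div]
  apply div_nonneg _ this.le
  linarith

end VK

namespace VK
open Complex Set Topology MeasureTheory

/-- The negative logarithmic derivative of zeta with its pole at one removed. -/
def G (s : ℂ) : ℂ := D s - logDeriv X s

lemma G_eq {s : ℂ} (hs : 1 < s.re) : G s = LΛ s - 1 / (s - 1) := by
  rw [G, logDeriv_X hs]; ring

lemma logDeriv_X_differentiableAt (hRH : RiemannHypothesis) {s : ℂ} (hs : 1/2 < s.re) :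
    DifferentiableAt ℂ (logDeriv X) s :=
  (X_differentiable.analyticAt s).deriv.differentiableAt.div (X_differentiable s)
    (X_ne_zero hRH hs)

lemma D_differentiableAt {s : ℂ} (hs : 0 < s.re) : DifferentiableAt ℂ D s := by
  have h0 : s ≠ 0 := by rintro rfl; simp at hs
  have hs2 : 0 < (s / 2).re := by
    have : (s / 2).re = s.re / 2 := by simp
    rw [this]; linarith
  have hopen : IsOpen {z : ℂ | 0 < z.re} := isOpen_lt continuous_const Complex.continuous_re
  have hGa : AnalyticAt ℂ Complex.Gamma (s / 2) := by
    have : DifferentiableOn ℂ Complex.Gamma {z : ℂ | 0 < z.re} := by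
      intro z hz
      have hz : 0 < z.re := hz
      refine (Complex.differentiableAt_Gamma z fun m h => ?_).differentiableWithinAt
      rw [h] at hz
      simp at hz
      have : (0 : ℝ) ≤ m := m.cast_nonneg
      linarith
    exact this.analyticAt (hopen.mem_nhds hs2)
  have h1 : DifferentiableAt ℂ (logDeriv Complex.Gamma) (s / 2) :=
    hGa.deriv.differentiableAt.div hGa.differentiableAt (Complex.Gamma_ne_zero_of_re_pos hs2)
  have h2 : DifferentiableAt ℂ (fun s : ℂ => logDeriv Complex.Gamma (s / 2)) s :=
    DifferentiableAt.comp (g := logDeriv Complex.Gamma) (f := fun s : ℂ => s / 2) s h1 (by fun_prop)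
  unfold D
  exact (((differentiableAt_const 1).div differentiableAt_id h0).sub_const _).add (h2.div_const 2)

lemma G_differentiableAt (hRH : RiemannHypothesis) {s : ℂ} (hs : 1/2 < s.re) :
    DifferentiableAt ℂ G s :=
  (D_differentiableAt (by linarith)).sub (logDeriv_X_differentiableAt hRH hs)

lemma log_norm_le {s : ℂ} (h0 : 0 ≤ s.re) (h1 : s.re ≤ 3) :
    Real.log (2 + ‖s‖) ≤ 3 * Real.log (2 + |s.im|) := by
  have h2 : ‖s‖ ≤ |s.re| + |s.im| := Complex.norm_le_abs_re_add_abs_im s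
  rw [abs_of_nonneg h0] at h2
  have h3 : 2 + ‖s‖ ≤ (2 + |s.im|) ^ 3 := by
    nlinarith [abs_nonneg s.im, pow_nonneg (abs_nonneg s.im) 3, pow_nonneg (abs_nonneg s.im) 2]
  have h4 := Real.log_le_log (by positivity) h3
  rw [Real.log_pow] at h4
  exact_mod_cast h4

lemma logDeriv_X_strip (hRH : RiemannHypothesis) {ε : ℝ} (hε : 0 < ε) (hε2 : ε < 1/2) :
    ∃ C : ℝ, 0 < C ∧ ∀ s : ℂ, 1/2 + ε ≤ s.re → s.re ≤ 3 →
    ‖logDeriv X s‖ ≤ C * Real.log (2 + |s.im|) := by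
  obtain ⟨K, hK, hb⟩ := norm_logDeriv_X_le
  refine ⟨6 / ε * (3 * K), by positivity, fun s hs1 hs2 => ?_⟩
  set c : ℂ := s + ((2 - s.re : ℝ) : ℂ) with hc
  have hcre : c.re = 2 := by simp [hc]
  have hcim : c.im = s.im := by simp [hc]
  have hcs : ‖s - c‖ ≤ 3/2 - ε := by
    rw [hc, sub_add_cancel_left, norm_neg, Complex.norm_real, Real.norm_eq_abs, abs_le]
    constructor <;> linarith
  have hball (w : ℂ) (hw : w ∈ Metric.ball (0:ℂ) (3/2)) : 1/2 < (c + w).re := by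
    rw [mem_ball_zero_iff] at hw
    have h1 := abs_le.mp (Complex.abs_re_le_norm w)
    rw [add_re, hcre]; linarith
  set M := 3 * K * Real.log (2 + |s.im|) with hM
  have hlpos : 0 < Real.log (2 + |s.im|) := Real.log_pos (by linarith [abs_nonneg s.im])
  have hMpos : 0 < M := by positivity
  have hfc : ‖logDeriv X c‖ ≤ M := by
    refine (hb c hcre.ge).trans ?_
    have := log_norm_le (s := c) (by linarith) (by linarith)
    rw [hcim] at this
    rw [hM]; nlinarith
  have hBC := Complex.borelCaratheodory (f := fun w => - logDeriv X (c + w)) (M := M)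
    (R := 3/2) (z := s - c) hMpos
    (fun w hw => by
      have h1 := logDeriv_X_differentiableAt hRH (hball w hw)
      exact (DifferentiableAt.comp (g := logDeriv X) (f := fun w => c + w) w h1
        (by fun_prop)).neg.differentiableWithinAt)
    (fun w hw => by
      have := re_logDeriv_X_nonneg hRH (hball w hw)
      simp only [Set.mem_ofPred_eq, neg_re]
      linarith) (by norm_num)
    (by rw [mem_ball_zero_iff]; linarith)
  simp only [add_sub_cancel, add_zero, norm_neg] at hBC
  refine hBC.trans ?_
  have h1 : 2 * M * ‖s - c‖ / (3/2 - ‖s - c‖) ≤ 2 * M * (3/2) / ε := by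
    gcongr <;> linarith
  have h2 : ‖logDeriv X c‖ * (3/2 + ‖s - c‖) / (3/2 - ‖s - c‖) ≤ M * (3/2 + 3/2) / ε := by
    gcongr <;> linarith
  calc _ ≤ 2 * M * (3/2) / ε + M * (3/2 + 3/2) / ε := add_le_add h1 h2
    _ = _ := by rw [hM]; ring

lemma G_strip (hRH : RiemannHypothesis) {ε : ℝ} (hε : 0 < ε) (hε2 : ε < 1/2) :
    ∃ C : ℝ, 0 < C ∧ ∀ s : ℂ, 1/2 + ε ≤ s.re → s.re ≤ 3 →
    ‖G s‖ ≤ C * Real.log (2 + |s.im|) := by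
  obtain ⟨C, hC, h⟩ := logDeriv_X_strip hRH hε hε2
  refine ⟨C + 42, by positivity, fun s h1 h2 => ?_⟩
  have h3 := h s h1 h2
  have h4 := norm_D_le (s := s) (by linarith)
  have h5 := log_norm_le (s := s) (by linarith) h2
  have : ‖G s‖ ≤ ‖D s‖ + ‖logDeriv X s‖ := norm_sub_le _ _
  nlinarith

end VK

namespace VK
open Complex Set Topology MeasureTheory

lemma norm_sin_le_exp (z : ℂ) : ‖Complex.sin z‖ ≤ Real.exp |z.im| := by
  rw [Complex.sin, norm_div, norm_mul, Complex.norm_I, mul_one]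
  have h1 : ‖Complex.exp (-z * I) - Complex.exp (z * I)‖ ≤ Real.exp |z.im| + Real.exp |z.im| := by
    refine (norm_sub_le _ _).trans ?_
    rw [Complex.norm_exp, Complex.norm_exp]
    gcongr
    · simp [le_abs_self]
    · simp [neg_le_abs]
  simp only [Complex.norm_ofNat]
  linarith

lemma line_bound (hRH : RiemannHypothesis) : ∃ C : ℝ, 0 < C ∧ ∀ σ : ℝ, 1/2 < σ → σ ≤ 1 → ∀ k : ℝ,
    ∫ t in k..(k+1), (logDeriv X (σ + t * I)).re ≤ C * Real.log (2 + |k|) := by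
  obtain ⟨K, hK, hb⟩ := norm_logDeriv_X_le
  refine ⟨3/2 * (27 * K * Real.exp 2), by positivity, fun σ hσ hσ1 k => ?_⟩
  set f := logDeriv X with hf
  have hfd (s : ℂ) (hs : 1/2 < s.re) : DifferentiableAt ℂ f s := logDeriv_X_differentiableAt hRH hs
  have hfpos (s : ℂ) (hs : 1/2 < s.re) : 0 ≤ (f s).re := re_logDeriv_X_nonneg hRH hs
  set a : ℝ := k - 1 with ha
  set b : ℝ := k + 2 with hbdef
  set q : ℂ → ℂ := fun s => Complex.sin ((π / 3) * (-I * (s - σ) - a)) with hq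
  have hqd : Differentiable ℂ q := by rw [hq]; fun_prop
  have hfc (x y : ℝ) (hx : σ ≤ x) : ContinuousAt f (x + y * I) :=
    (hfd _ (by simp; linarith)).continuousAt
  -- continuity along horizontal / vertical lines
  have hch (y : ℝ) : ContinuousOn (fun x : ℝ => f (x + y * I)) (uIcc σ 2) := by
    intro x hx
    rw [uIcc_of_le (by linarith)] at hx
    exact (ContinuousAt.comp (g := f) (f := fun x : ℝ => (x + y * I : ℂ)) (hfc x y hx.1)
      (by fun_prop)).continuousWithinAt
  have hcv (x : ℝ) (hx : σ ≤ x) : Continuous (fun y : ℝ => f (x + y * I)) := by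
    rw [continuous_iff_continuousAt]
    intro y
    exact (ContinuousAt.comp (g := f) (f := fun y : ℝ => (x + y * I : ℂ)) (hfc x y hx)
      (by fun_prop))
  have hrect := Complex.integral_boundary_rect_eq_zero_of_differentiableOn (fun s => f s * q s)
    (σ + a * I) (2 + b * I) (by
      intro s hs
      have h1 : s.re ∈ uIcc σ 2 := by
        have := hs.1; simpa using this
      rw [uIcc_of_le (by linarith)] at h1
      exact ((hfd s (by linarith [h1.1])).mul (hqd s)).differentiableWithinAt)
  have r1 : (σ + a * I : ℂ).re = σ := by simp
  have r2 : (σ + a * I : ℂ).im = a := by simp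
  have r3 : (2 + b * I : ℂ).re = 2 := by simp
  have r4 : (2 + b * I : ℂ).im = b := by simp
  rw [r1, r2, r3, r4] at hrect
  -- values of q
  have qb (x : ℝ) : q (x + a * I) = -(Real.sinh (π / 3 * (x - σ)) : ℂ) * I := by
    have e : ((π:ℂ) / 3) * (-I * ((x + a * I) - σ) - a) = -(((π / 3 * (x - σ) : ℝ) : ℂ) * I) := by
      push_cast
      linear_combination (-(π:ℂ) / 3 * a) * Complex.I_sq
    simp only [hq]
    rw [e, Complex.sin_neg, Complex.sin_mul_I, ← Complex.ofReal_sinh]; ring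
  have qt (x : ℝ) : q (x + b * I) = (Real.sinh (π / 3 * (x - σ)) : ℂ) * I := by
    have e : ((π:ℂ) / 3) * (-I * ((x + b * I) - σ) - a) =
        π - (((π / 3 * (x - σ) : ℝ) : ℂ) * I) := by
      push_cast [ha, hbdef]
      linear_combination (-(π:ℂ) / 3 * (k + 2)) * Complex.I_sq
    simp only [hq]
    rw [e, Complex.sin_pi_sub, Complex.sin_mul_I, ← Complex.ofReal_sinh]
  have ql (y : ℝ) : q (σ + y * I) = (Real.sin (π / 3 * (y - a)) : ℂ) := by
    have e : ((π:ℂ) / 3) * (-I * ((σ + y * I) - σ) - a) = ((π / 3 * (y - a) : ℝ) : ℂ) := by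
      push_cast
      linear_combination (-(π:ℂ) / 3 * y) * Complex.I_sq
    simp only [hq]
    rw [e, Complex.ofReal_sin]
  have qr (y : ℝ) : ‖q (((2:ℝ):ℂ) + y * I)‖ ≤ Real.exp 2 := by
    refine (norm_sin_le_exp _).trans (Real.exp_le_exp.mpr ?_)
    have e : ((π:ℂ) / 3) * (-I * ((((2:ℝ):ℂ) + y * I) - σ) - a) =
        ((π / 3 * (y - a) : ℝ) : ℂ) + ((- (π / 3 * (2 - σ)) : ℝ) : ℂ) * I := by
      push_cast
      linear_combination (-(π:ℂ) / 3 * y) * Complex.I_sq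
    rw [e]
    simp only [add_im, ofReal_im, mul_im, ofReal_re, I_im, I_re, mul_one, mul_zero, add_zero,
      zero_add]
    rw [abs_neg, abs_of_nonneg (by have := Real.pi_pos; apply mul_nonneg <;> linarith)]
    nlinarith [Real.pi_pos, Real.pi_lt_four]
  -- imaginary part
  have him := congrArg Complex.im hrect
  have hint_h (y : ℝ) : IntervalIntegrable (fun x : ℝ => f (x + y * I) * q (x + y * I)) volume σ 2 := by
    apply ContinuousOn.intervalIntegrable
    exact (hch y).mul (by fun_prop)
  have hint_v (x : ℝ) (hx : σ ≤ x) (c d : ℝ) :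
      IntervalIntegrable (fun y : ℝ => f (x + y * I) * q (x + y * I)) volume c d := by
    apply Continuous.intervalIntegrable
    exact (hcv x hx).mul (by fun_prop)
  have imint {g : ℝ → ℂ} {c d : ℝ} (hg : IntervalIntegrable g volume c d) :
      (∫ x in c..d, g x).im = ∫ x in c..d, (g x).im :=
    (Complex.imCLM.intervalIntegral_comp_comm hg).symm
  have reint {g : ℝ → ℂ} {c d : ℝ} (hg : IntervalIntegrable g volume c d) :
      (∫ x in c..d, g x).re = ∫ x in c..d, (g x).re :=
    (Complex.reCLM.intervalIntegral_comp_comm hg).symm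
  have hint_r := hint_v 2 (by linarith) a b
  simp only [Complex.ofReal_ofNat] at hint_r
  simp only [add_im, sub_im, smul_eq_mul, I_mul_im, zero_im] at him
  have hr2 := reint hint_r
  rw [imint (hint_h a), imint (hint_h b), reint (hint_v σ le_rfl a b)] at him
  simp only [Complex.ofReal_ofNat] at him
  have hbot : ∫ x in σ..2, (f (x + a * I) * q (x + a * I)).im ≤ 0 := by
    rw [← neg_nonneg, ← intervalIntegral.integral_neg]
    apply intervalIntegral.integral_nonneg (by linarith)
    intro x hx
    rw [qb]
    have h1 := hfpos (x + a * I) (by simp; linarith [hx.1])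
    have h2 : 0 ≤ Real.sinh (π / 3 * (x - σ)) := by
      rw [Real.sinh_nonneg_iff]; have := Real.pi_pos; apply mul_nonneg <;> linarith [hx.1]
    simp only [mul_im, mul_re, neg_re, neg_im, ofReal_re, ofReal_im, I_re, I_im]
    nlinarith
  have htop : 0 ≤ ∫ x in σ..2, (f (x + b * I) * q (x + b * I)).im := by
    apply intervalIntegral.integral_nonneg (by linarith)
    intro x hx
    rw [qt]
    have h1 := hfpos (x + b * I) (by simp; linarith [hx.1])
    have h2 : 0 ≤ Real.sinh (π / 3 * (x - σ)) := by
      rw [Real.sinh_nonneg_iff]; have := Real.pi_pos; apply mul_nonneg <;> linarith [hx.1]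
    simp only [mul_im, mul_re, ofReal_re, ofReal_im, I_re, I_im]
    nlinarith
  have hlk : 0 < Real.log (2 + |k|) := Real.log_pos (by linarith [abs_nonneg k])
  have hright : ∫ y in a..b, (f (2 + y * I) * q (2 + y * I)).re ≤
      27 * K * Real.exp 2 * Real.log (2 + |k|) := by
    have hab : a ≤ b := by linarith
    have h0 : ‖∫ y in a..b, f (2 + y * I) * q (2 + y * I)‖ ≤
        (9 * K * Real.log (2 + |k|) * Real.exp 2) * |b - a| := by
      apply intervalIntegral.norm_integral_le_of_norm_le_const
      intro y hy
      rw [uIoc_of_le hab] at hy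
      rw [norm_mul]
      have h1 := qr y
      simp only [Complex.ofReal_ofNat] at h1
      have h2 := hb (2 + y * I) (by simp)
      have h3 := log_norm_le (s := 2 + y * I) (by simp) (by simp; norm_num)
      have h4 : (2 + y * I : ℂ).im = y := by simp
      rw [h4] at h3
      have h5 : Real.log (2 + |y|) ≤ 3 * Real.log (2 + |k|) := by
        have h6 : |y| ≤ |k| + 2 := by
          have := abs_le.mp (le_refl |k|)
          rw [abs_le]; constructor <;> linarith [hy.1, hy.2]
        have h3 : 2 + |y| ≤ (2 + |k|) ^ 3 := by
          nlinarith [abs_nonneg k, pow_nonneg (abs_nonneg k) 3, pow_nonneg (abs_nonneg k) 2]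
        have h4 := Real.log_le_log (by positivity) h3
        rw [Real.log_pow] at h4
        exact_mod_cast h4
      have h7 : ‖f (2 + y * I)‖ ≤ 9 * K * Real.log (2 + |k|) := by
        refine h2.trans ?_
        nlinarith
      gcongr
    have h1 : |b - a| = 3 := by rw [ha, hbdef]; norm_num
    rw [h1] at h0
    have h2 := (Complex.re_le_norm _).trans h0
    rw [hr2] at h2
    linarith
  have hleft : ∫ y in a..b, (f (σ + y * I) * q (σ + y * I)).re ≤
      27 * K * Real.exp 2 * Real.log (2 + |k|) := by
    linarith
  have hleq : ∀ y : ℝ, (f (σ + y * I) * q (σ + y * I)).re =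
      (f (σ + y * I)).re * Real.sin (π / 3 * (y - a)) := by
    intro y; rw [ql, Complex.re_mul_ofReal]
  simp only [hleq] at hleft
  have hcre : Continuous (fun y : ℝ => (f (σ + y * I)).re) :=
    Complex.continuous_re.comp (hcv σ le_rfl)
  have hcs : Continuous (fun y : ℝ => (f (σ + y * I)).re * Real.sin (π / 3 * (y - a))) :=
    hcre.mul (by fun_prop)
  have hsub : ∫ y in k..(k+1), (f (σ + y * I)).re * Real.sin (π / 3 * (y - a)) ≤
      ∫ y in a..b, (f (σ + y * I)).re * Real.sin (π / 3 * (y - a)) := by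
    apply intervalIntegral.integral_mono_interval (by linarith) (by linarith) (by linarith)
    · filter_upwards [ae_restrict_mem measurableSet_Ioc] with y hy
      apply mul_nonneg (hfpos _ (by simp; linarith))
      apply Real.sin_nonneg_of_nonneg_of_le_pi
      · have := Real.pi_pos; apply mul_nonneg <;> linarith [hy.1]
      · nlinarith [Real.pi_pos, hy.2]
    · exact hcs.intervalIntegrable _ _
  have hmono : ∫ y in k..(k+1), (2/3) * (f (σ + y * I)).re ≤
      ∫ y in k..(k+1), (f (σ + y * I)).re * Real.sin (π / 3 * (y - a)) := by
    apply intervalIntegral.integral_mono_on (by linarith)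
      ((hcre.const_mul _).intervalIntegrable _ _) (hcs.intervalIntegrable _ _)
    intro y hy
    have h1 := hfpos (σ + y * I) (by simp; linarith)
    have h2 : 2/3 ≤ Real.sin (π / 3 * (y - a)) := by
      have hpi := Real.pi_pos
      rcases le_total (π / 3 * (y - a)) (π / 2) with h | h
      · have := Real.mul_le_sin (x := π / 3 * (y - a))
          (by apply mul_nonneg <;> linarith [hy.1]) h
        refine le_trans ?_ this
        have e : 2 / π * (π / 3 * (y - a)) = 2/3 * (y - a) := by field_simp
        rw [e]; linarith [hy.1]
      · have := Real.mul_le_sin (x := π - π / 3 * (y - a)) (by nlinarith [hy.2]) (by linarith)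
        rw [Real.sin_pi_sub] at this
        refine le_trans ?_ this
        have e : 2 / π * (π - π / 3 * (y - a)) = 2 - 2/3 * (y - a) := by field_simp
        rw [e]; linarith [hy.2]
    nlinarith
  rw [intervalIntegral.integral_const_mul] at hmono
  linarith

end VK

namespace VK
open Complex Set Topology MeasureTheory

lemma holo_param {μ : Measure ℝ} {U : Set ℂ} (hU : IsOpen U) (K : ℂ → ℝ → ℂ) (b : ℝ → ℝ)
    (hb : Integrable b μ) (hm : ∀ z ∈ U, AEStronglyMeasurable (K z) μ)
    (hd : ∀ᵐ a ∂μ, DifferentiableOn ℂ (fun z => K z a) U)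
    (hbd : ∀ᵐ a ∂μ, ∀ z ∈ U, ‖K z a‖ ≤ b a) :
    DifferentiableOn ℂ (fun z => ∫ a, K z a ∂μ) U := by
  intro z₀ hz₀
  obtain ⟨r, hr, hball⟩ := Metric.isOpen_iff.mp hU z₀ hz₀
  have hKint : Integrable (K z₀) μ :=
    hb.mono' (hm z₀ hz₀) (hbd.mono fun a ha => ha z₀ hz₀)
  have hsub (x : ℂ) (hx : x ∈ Metric.ball z₀ (r / 2)) : Metric.closedBall x (r / 3) ⊆ U := by
    intro y hy
    apply hball
    rw [Metric.mem_ball] at hx ⊢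
    rw [Metric.mem_closedBall] at hy
    linarith [dist_triangle y x z₀]
  have hmeas' : AEStronglyMeasurable (fun a => deriv (fun z => K z a) z₀) μ := by
    set u : ℕ → ℂ := fun n => z₀ + ((r / (n + 2) : ℝ) : ℂ) with hu
    have hupos (n : ℕ) : 0 < r / ((n : ℝ) + 2) := by positivity
    have huU (n : ℕ) : u n ∈ U := by
      apply hball
      rw [Metric.mem_ball, dist_eq_norm, hu]
      simp only [add_sub_cancel_left]
      rw [Complex.norm_real, Real.norm_of_nonneg (hupos n).le,
        div_lt_iff₀ (by positivity)]
      nlinarith [(n.cast_nonneg : (0:ℝ) ≤ n)]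
    have hut : Tendsto u atTop (𝓝[≠] z₀) := by
      rw [tendsto_nhdsWithin_iff]
      constructor
      · have h1 : Tendsto (fun n : ℕ => r / ((n : ℝ) + 2)) atTop (𝓝 0) :=
          Tendsto.div_atTop tendsto_const_nhds
            (tendsto_atTop_add_const_right _ _ tendsto_natCast_atTop_atTop)
        have h2 := (Complex.continuous_ofReal.tendsto 0).comp h1
        have := (tendsto_const_nhds (x := z₀)).add h2
        simpa [hu] using this
      · refine Filter.Eventually.of_forall fun n => ?_
        simp only [hu, mem_compl_iff, mem_singleton_iff, add_eq_left]
        exact_mod_cast (hupos n).ne'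
    refine aestronglyMeasurable_of_tendsto_ae atTop
      (f := fun n a => (u n - z₀)⁻¹ * (K (u n) a - K z₀ a)) (fun n => ?_) ?_
    · exact ((hm _ (huU n)).sub (hm z₀ hz₀)).const_mul _
    · filter_upwards [hd] with a ha
      have h1 := (ha.differentiableAt (hU.mem_nhds hz₀)).hasDerivAt.tendsto_slope
      have h2 := h1.comp hut
      refine h2.congr fun n => ?_
      simp [slope, vsub_eq_sub]
  have := (hasDerivAt_integral_of_dominated_loc_of_deriv_le (μ := μ) (F := K)
    (F' := fun z a => deriv (fun z => K z a) z) (x₀ := z₀) (s := Metric.ball z₀ (r / 2))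
    (bound := fun a => b a / (r / 3)) (Metric.ball_mem_nhds _ (by positivity))
    (by filter_upwards [hU.mem_nhds hz₀] with z hz using hm z hz) hKint hmeas'
    (by
      filter_upwards [hd, hbd] with a ha hb x hx
      apply Complex.norm_deriv_le_of_forall_mem_sphere_norm_le (by positivity)
      · apply (ha.mono (hsub x hx)).diffContOnCl_ball le_rfl
      · intro z hz
        exact hb z (hsub x hx (Metric.sphere_subset_closedBall hz)))
    (hb.div_const _)
    (by
      filter_upwards [hd] with a ha x hx
      have hxU : x ∈ U := hsub x hx (Metric.mem_closedBall_self (by positivity))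
      exact (ha.differentiableAt (hU.mem_nhds hxU)).hasDerivAt)).2
  exact this.differentiableAt.differentiableWithinAt

lemma w_integrable {w : ℝ → ℝ} {A : ℝ} (hw : Continuous w)
    (hwb : ∀ t, |w t| ≤ A / (1 + |t|) ^ 2) : Integrable (fun t => (w t : ℂ)) := by
  have h := (integrable_one_add_norm (E := ℝ) (μ := volume) (r := 2) (by simp)).const_mul A
  refine h.mono' (Complex.continuous_ofReal.comp hw).aestronglyMeasurable ?_
  refine Filter.Eventually.of_forall fun t => ?_
  rw [Complex.norm_real, Real.norm_eq_abs]
  refine (hwb t).trans (le_of_eq ?_)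
  rw [Real.rpow_neg (by positivity), Real.norm_eq_abs, div_eq_mul_inv]
  norm_cast

lemma log_bound (t : ℝ) {A : ℝ} (hA : 0 ≤ A) : A / (1 + |t|) ^ 2 * Real.log (3 + |t|) ≤
    4 * A * (1 + ‖t‖) ^ (-(3/2) : ℝ) := by
  have h0 := abs_nonneg t
  have h1 := Real.log_le_rpow_div (x := 3 + |t|) (by linarith) (ε := 1/2) (by norm_num)
  have h2 : (3 + |t|) ^ (1/2 : ℝ) ≤ 2 * (1 + |t|) ^ (1/2 : ℝ) := by
    have h4 : (4:ℝ) ^ (1/2 : ℝ) = 2 := by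
      rw [show (4:ℝ) = 2 ^ (2:ℝ) by norm_num, ← Real.rpow_mul (by norm_num)]; norm_num
    calc (3 + |t|) ^ (1/2 : ℝ) ≤ (4 * (1 + |t|)) ^ (1/2 : ℝ) := by gcongr ?_ ^ _; linarith
      _ = _ := by rw [Real.mul_rpow (by norm_num) (by linarith), h4]
  have h3 : (1 + ‖t‖) ^ (-(3/2) : ℝ) = (1 + |t|) ^ (1/2 : ℝ) / (1 + |t|) ^ 2 := by
    rw [Real.norm_eq_abs, ← Real.rpow_natCast (1 + |t|) 2, ← Real.rpow_sub (by linarith)]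
    norm_num
  rw [h3]
  have h4 : Real.log (3 + |t|) ≤ 4 * (1 + |t|) ^ (1/2 : ℝ) := by linarith
  calc A / (1 + |t|) ^ 2 * Real.log (3 + |t|) ≤ A / (1 + |t|) ^ 2 * (4 * (1 + |t|) ^ (1/2 : ℝ)) := by
        gcongr
    _ = _ := by ring

end VK

namespace VK
open Complex Set Topology MeasureTheory

lemma term_shift (g : ℕ → ℂ) (z : ℂ) (t : ℝ) (n : ℕ) :
    LSeries.term g (z + t * I) n = LSeries.term g z n * Complex.exp (-(t * Real.log n) * I) := by
  rw [LSeries.term_def, LSeries.term_def]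
  split_ifs with h
  · simp
  · have hn : (n : ℂ) ≠ 0 := by exact_mod_cast h
    rw [Complex.cpow_add _ _ hn, Complex.cpow_def_of_ne_zero hn (t * I), ← Complex.natCast_log,
      neg_mul, Complex.exp_neg]
    rw [show (t * Real.log n * I : ℂ) = Real.log n * (t * I) by ring]
    rw [← div_div, div_eq_mul_inv _ (Complex.exp _)]

lemma norm_exp_mul_I' (x y : ℝ) : ‖Complex.exp (-(x * y) * I)‖ = 1 := by
  have : (-(x * y) * I : ℂ) = ((-(x * y) : ℝ) : ℂ) * I := by push_cast; ring
  rw [this, Complex.norm_exp_ofReal_mul_I]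

lemma sum_side {w φ : ℝ → ℝ} {A a₀ : ℝ} (hw : Continuous w)
    (hwb : ∀ t, |w t| ≤ A / (1 + |t|) ^ 2) (hφ0 : ∀ a, a₀ ≤ a → φ a = 0)
    (hft : ∀ a : ℝ, 0 ≤ a → ∫ t : ℝ, (w t : ℂ) * Complex.exp (-(t * a) * I) = φ a)
    (N : ℕ) (hN : a₀ ≤ Real.log (N + 1)) {z : ℂ} (hz : 1 < z.re) :
    ∫ t : ℝ, (w t : ℂ) * LΛ (z + t * I) = ∑ n ∈ Finset.range (N + 1),
      (ArithmeticFunction.vonMangoldt n : ℂ) * Complex.exp (-(z * Real.log n)) * φ (Real.log n) := by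
  have hwi := w_integrable hw hwb
  set g : ℕ → ℂ := fun n => ↑(ArithmeticFunction.vonMangoldt n) with hg
  have hterm : ∀ n (t : ℝ), (w t : ℂ) * LSeries.term g (z + t * I) n =
      LSeries.term g z n * ((w t : ℂ) * Complex.exp (-(t * Real.log n) * I)) := by
    intro n t; rw [term_shift]; ring
  have hIntg (y : ℝ) : Integrable (fun t : ℝ => (w t : ℂ) * Complex.exp (-(t * y) * I)) := by
    refine hwi.mul_bdd (c := 1) (by fun_prop) ?_
    exact Filter.Eventually.of_forall fun t => (norm_exp_mul_I' t y).le
  have hS := hasSum_integral_of_summable_integral_norm (μ := (volume : Measure ℝ))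
    (F := fun n (t : ℝ) => (w t : ℂ) * LSeries.term g (z + t * I) n) (fun n => by
      simp only [hterm]
      exact (hIntg _).const_mul _) (by
      have hsum : Summable fun n => ‖LSeries.term g z n‖ * ∫ t : ℝ, ‖(w t : ℂ)‖ :=
        ((ArithmeticFunction.LSeriesSummable_vonMangoldt hz).norm).mul_right _
      refine hsum.congr fun n => ?_
      rw [← integral_const_mul]
      congr 1; ext t
      rw [hterm, norm_mul, norm_mul, norm_exp_mul_I', mul_one])
  have e1 : ∀ t : ℝ, ∑' n, (w t : ℂ) * LSeries.term g (z + t * I) n = (w t : ℂ) * LΛ (z + t * I) := by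
    intro t
    rw [tsum_mul_left]; rfl
  simp only [e1] at hS
  rw [← hS.tsum_eq]
  have e2 : ∀ n : ℕ, ∫ t : ℝ, (w t : ℂ) * LSeries.term g (z + t * I) n =
      (ArithmeticFunction.vonMangoldt n : ℂ) * Complex.exp (-(z * Real.log n)) * φ (Real.log n) := by
    intro n
    simp only [hterm]
    rw [integral_const_mul, hft _ (Real.log_natCast_nonneg n), LSeries.term_def]
    split_ifs with h
    · simp [h]
    · have hn : (n : ℂ) ≠ 0 := by exact_mod_cast h
      rw [Complex.cpow_def_of_ne_zero hn, ← Complex.natCast_log, Complex.exp_neg, div_eq_mul_inv,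
        mul_comm z]
  simp only [e2]
  rw [tsum_eq_sum (s := Finset.range (N + 1))]
  intro n hn
  rw [Finset.mem_range, not_lt] at hn
  have : φ (Real.log n) = 0 := by
    apply hφ0
    refine hN.trans (Real.log_le_log (by positivity) ?_)
    exact_mod_cast hn
  rw [this]; simp

lemma pole_side {w φ : ℝ → ℝ} {A a₀ : ℝ} (hw : Continuous w)
    (hwb : ∀ t, |w t| ≤ A / (1 + |t|) ^ 2) (ha₀ : 0 ≤ a₀) (hφ0 : ∀ a, a₀ ≤ a → φ a = 0)
    (hft : ∀ a : ℝ, 0 ≤ a → ∫ t : ℝ, (w t : ℂ) * Complex.exp (-(t * a) * I) = φ a)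
    {z : ℂ} (hz : 1 < z.re) :
    ∫ t : ℝ, (w t : ℂ) * (1 / (z + t * I - 1)) =
      ∫ a in Ioc 0 a₀, Complex.exp ((1 - z) * a) * φ a := by
  have hwi := w_integrable hw hwb
  have e1 : ∀ t : ℝ, (w t : ℂ) * (1 / (z + t * I - 1)) =
      ∫ a in Ioi (0:ℝ), (w t : ℂ) * Complex.exp ((1 - z) * a) * Complex.exp (-(t * a) * I) := by
    intro t
    have := integral_exp_mul_complex_Ioi (a := -(z + t * I - 1)) (by simp; linarith) 0
    have e : ∀ a : ℝ, (w t : ℂ) * Complex.exp ((1 - z) * a) * Complex.exp (-(t * a) * I) =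
        w t * Complex.exp (-(z + t * I - 1) * a) := by
      intro a
      rw [mul_assoc, ← Complex.exp_add]; ring_nf
    simp only [e]
    rw [integral_const_mul, this]
    simp
    left; rw [neg_div, ← div_neg, ← one_div]; ring_nf
  simp only [e1]
  have hexp : Integrable (fun a : ℝ => Complex.exp ((1 - z) * a)) (volume.restrict (Ioi 0)) :=
    integrableOn_exp_mul_complex_Ioi (by simp; linarith) 0
  rw [integral_integral_swap]
  · have e2 : ∀ a ∈ Ioi (0:ℝ), ∫ t : ℝ, (w t : ℂ) * Complex.exp ((1 - z) * a) *
        Complex.exp (-(t * a) * I) = Complex.exp ((1 - z) * a) * φ a := by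
      intro a ha
      have ha : 0 < a := ha
      rw [← hft a ha.le, ← integral_const_mul]
      congr 1; ext t; ring
    rw [setIntegral_congr_fun measurableSet_Ioi e2]
    apply setIntegral_eq_of_subset_of_forall_sdiff_eq_zero measurableSet_Ioi Ioc_subset_Ioi_self
    intro a ha
    have h1 : 0 < a := ha.1
    have : a₀ ≤ a := by
      by_contra h
      exact ha.2 ⟨h1, by linarith⟩
    rw [hφ0 a this]; simp
  · have := (hwi.mul_prod hexp).mul_bdd (c := 1)
      (g := fun p : ℝ × ℝ => Complex.exp (-(p.1 * p.2) * I)) (by fun_prop)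
      (Filter.Eventually.of_forall fun p => (norm_exp_mul_I' p.1 p.2).le)
    exact this

end VK

namespace VK
open Complex Set Topology MeasureTheory

lemma wG_bound (hRH : RiemannHypothesis) {w : ℝ → ℝ} {A ε : ℝ} (hε : 0 < ε) (hε2 : ε < 1/2)
    (hwb : ∀ t, |w t| ≤ A / (1 + |t|) ^ 2) : ∃ C : ℝ, 0 ≤ C ∧ ∀ z : ℂ, 1/2 + ε ≤ z.re →
    z.re ≤ 3 → |z.im| ≤ 1 → ∀ t : ℝ, ‖(w t : ℂ) * G (z + t * I)‖ ≤ C * (1 + ‖t‖) ^ (-(3/2) : ℝ) := by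
  obtain ⟨C, hC, h⟩ := G_strip hRH hε hε2
  have hA : 0 ≤ A := by
    have := (abs_nonneg _).trans (hwb 0); simpa using this
  refine ⟨C * (4 * A), by positivity, fun z h1 h2 h3 t => ?_⟩
  have h4 := h (z + t * I) (by simpa using h1) (by simpa using h2)
  have h5 : Real.log (2 + |(z + t * I).im|) ≤ Real.log (3 + |t|) := by
    apply Real.log_le_log (by positivity)
    have : (z + t * I).im = z.im + t := by simp
    rw [this]
    linarith [abs_add_le z.im t]
  have h6 := log_bound t hA
  have h7 : 0 ≤ Real.log (3 + |t|) := Real.log_nonneg (by linarith [abs_nonneg t])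
  rw [norm_mul, Complex.norm_real, Real.norm_eq_abs]
  calc |w t| * ‖G (z + t * I)‖ ≤ A / (1 + |t|) ^ 2 * (C * Real.log (3 + |t|)) := by
        gcongr
        · exact hwb t
        · exact h4.trans (by gcongr)
    _ = C * (A / (1 + |t|) ^ 2 * Real.log (3 + |t|)) := by ring
    _ ≤ C * (4 * A * (1 + ‖t‖) ^ (-(3/2) : ℝ)) := by gcongr
    _ = _ := by ring

lemma G_line_cont (hRH : RiemannHypothesis) {z : ℂ} (hz : 1/2 < z.re) :
    Continuous (fun t : ℝ => G (z + t * I)) := by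
  rw [continuous_iff_continuousAt]
  intro t
  have h := (G_differentiableAt hRH (s := z + t * I) (by simpa using hz)).continuousAt
  exact ContinuousAt.comp (g := G) (f := fun t : ℝ => z + t * I) h (by fun_prop)

lemma explicit_formula (hRH : RiemannHypothesis) {w φ : ℝ → ℝ} {A a₀ : ℝ} (hw : Continuous w)
    (hwb : ∀ t, |w t| ≤ A / (1 + |t|) ^ 2) (ha₀ : 0 ≤ a₀) (hφ : Continuous φ)
    (hφ0 : ∀ a, a₀ ≤ a → φ a = 0)
    (hft : ∀ a : ℝ, 0 ≤ a → ∫ t : ℝ, (w t : ℂ) * Complex.exp (-(t * a) * I) = φ a)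
    (N : ℕ) (hN : a₀ ≤ Real.log (N + 1)) {σ : ℝ} (hσ : 1/2 < σ) (hσ1 : σ ≤ 1) :
    Integrable (fun t : ℝ => (w t : ℂ) * G (σ + t * I)) ∧
    ∫ t : ℝ, (w t : ℂ) * G (σ + t * I) = ∑ n ∈ Finset.range (N + 1),
      (ArithmeticFunction.vonMangoldt n : ℂ) * Complex.exp (-(σ * Real.log n)) * φ (Real.log n)
      - ∫ a in Ioc 0 a₀, Complex.exp ((1 - σ) * a) * φ a := by
  set ε := (σ - 1/2) / 2 with hεd
  have hε : 0 < ε := by rw [hεd]; linarith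
  have hε2 : ε < 1/2 := by rw [hεd]; linarith
  obtain ⟨C, hC, hb⟩ := wG_bound hRH hε hε2 hwb
  set U : Set ℂ := Ioo (1/2 + ε) 3 ×ℂ Ioo (-1) 1 with hU
  have hUo : IsOpen U := isOpen_Ioo.reProdIm isOpen_Ioo
  have hUc : IsPreconnected U := by
    apply Convex.isPreconnected
    exact ((convex_Ioo _ _).is_linear_preimage (f := Complex.reLm) Complex.reLm.isLinear).inter
      ((convex_Ioo _ _).is_linear_preimage (f := Complex.imLm) Complex.imLm.isLinear)
  have hUm : ∀ z ∈ U, (1/2 + ε < z.re ∧ z.re < 3) ∧ |z.im| ≤ 1 := by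
    intro z hz
    rw [hU, mem_reProdIm] at hz
    exact ⟨hz.1, abs_le.mpr ⟨hz.2.1.le, hz.2.2.le⟩⟩
  have hbi : Integrable (fun t : ℝ => C * (1 + ‖t‖) ^ (-(3/2) : ℝ)) :=
    (integrable_one_add_norm (E := ℝ) (μ := volume) (r := 3/2) (by simp; norm_num)).const_mul C
  have hm : ∀ z ∈ U, AEStronglyMeasurable (fun t : ℝ => (w t : ℂ) * G (z + t * I)) volume := by
    intro z hz
    have := hUm z hz
    exact ((Complex.continuous_ofReal.comp hw).mul
      (G_line_cont hRH (by linarith [this.1.1]))).aestronglyMeasurable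
  have hbU : ∀ t : ℝ, ∀ z ∈ U, ‖(w t : ℂ) * G (z + t * I)‖ ≤ C * (1 + ‖t‖) ^ (-(3/2) : ℝ) := by
    intro t z hz
    have := hUm z hz
    exact hb z this.1.1.le this.1.2.le this.2 t
  have hI : ∀ z ∈ U, Integrable (fun t : ℝ => (w t : ℂ) * G (z + t * I)) := fun z hz =>
    hbi.mono' (hm z hz) (Filter.Eventually.of_forall fun t => hbU t z hz)
  have hL : DifferentiableOn ℂ (fun z : ℂ => ∫ t : ℝ, (w t : ℂ) * G (z + t * I)) U := by
    refine holo_param hUo (fun z t => (w t : ℂ) * G (z + t * I)) _ hbi hm ?_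
      (Filter.Eventually.of_forall hbU)
    refine Filter.Eventually.of_forall fun t z hz => ?_
    have h := G_differentiableAt hRH (s := z + t * I) (by
      have := (hUm z hz).1.1
      simp; linarith)
    exact ((DifferentiableAt.comp z (g := G) (f := fun z : ℂ => z + t * I) h
      (by fun_prop)).const_mul _).differentiableWithinAt
  have hR1 : DifferentiableOn ℂ (fun z : ℂ => ∫ a in Ioc 0 a₀, Complex.exp ((1 - z) * a) * φ a) U := by
    refine holo_param (μ := volume.restrict (Ioc 0 a₀)) hUo
      (fun z a => Complex.exp ((1 - z) * a) * φ a) (fun a => Real.exp (4 * a) * |φ a|) ?_ ?_ ?_ ?_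
    · have : Continuous fun a : ℝ => Real.exp (4 * a) * |φ a| := by fun_prop
      exact this.integrableOn_Ioc
    · intro z hz
      have : Continuous fun a : ℝ => Complex.exp ((1 - z) * a) * φ a := by fun_prop
      exact this.aestronglyMeasurable
    · refine Filter.Eventually.of_forall fun a => ?_
      have : Differentiable ℂ fun z : ℂ => Complex.exp ((1 - z) * a) * φ a := by fun_prop
      exact this.differentiableOn
    · refine (ae_restrict_iff' measurableSet_Ioc).mpr (Filter.Eventually.of_forall fun a ha z hz => ?_)
      have := hUm z hz
      rw [norm_mul, Complex.norm_exp, Complex.norm_real, Real.norm_eq_abs]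
      gcongr
      simp
      nlinarith [ha.1, this.1.1]
  have hR2 : DifferentiableOn ℂ (fun z : ℂ => ∑ n ∈ Finset.range (N + 1),
      (ArithmeticFunction.vonMangoldt n : ℂ) * Complex.exp (-(z * Real.log n)) * φ (Real.log n)) U := by
    have : Differentiable ℂ (fun z : ℂ => ∑ n ∈ Finset.range (N + 1),
      (ArithmeticFunction.vonMangoldt n : ℂ) * Complex.exp (-(z * Real.log n)) * φ (Real.log n)) := by
      fun_prop
    exact this.differentiableOn
  have h2U : (2 : ℂ) ∈ U := by
    rw [hU, mem_reProdIm]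
    simp
    constructor <;> linarith
  have hσU : (σ : ℂ) ∈ U := by
    rw [hU, mem_reProdIm]
    simp
    constructor <;> linarith
  refine ⟨hI _ hσU, ?_⟩
  refine AnalyticOnNhd.eqOn_of_preconnected_of_eventuallyEq (hL.analyticOnNhd hUo)
    ((hR2.sub hR1).analyticOnNhd hUo) hUc h2U ?_ hσU
  have hn : ∀ᶠ z : ℂ in 𝓝 2, z ∈ U ∧ 1 < z.re := by
    apply (hUo.mem_nhds h2U |> fun h => (show ∀ᶠ z : ℂ in 𝓝 2, z ∈ U from h)).and
    exact (Complex.continuous_re.isOpen_preimage _ isOpen_Ioi).mem_nhds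
      (show (1:ℝ) < (2:ℂ).re by norm_num)
  filter_upwards [hn] with z hz
  have hP : Integrable (fun t : ℝ => (w t : ℂ) * (1 / (z + t * I - 1))) := by
    have hre : ∀ t : ℝ, z.re - 1 ≤ ‖z + t * I - 1‖ := fun t => by
      have := Complex.re_le_norm (z + t * I - 1)
      simpa using this
    have h0 : ∀ t : ℝ, z + t * I - 1 ≠ 0 := fun t h => by
      have := hre t
      rw [h, norm_zero] at this
      linarith [hz.2]
    refine (w_integrable hw hwb).mul_bdd (c := 1 / (z.re - 1)) ?_ ?_
    · apply Continuous.aestronglyMeasurable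
      exact continuous_const.div (by fun_prop) h0
    · refine Filter.Eventually.of_forall fun t => ?_
      rw [norm_div, norm_one]
      exact one_div_le_one_div_of_le (by linarith [hz.2]) (hre t)
  have hsum := integral_add (hI z hz.1) hP
  have e : ∀ t : ℝ, (w t : ℂ) * G (z + t * I) + (w t : ℂ) * (1 / (z + t * I - 1)) =
      w t * LΛ (z + t * I) := by
    intro t
    rw [G_eq (by simpa using hz.2)]; ring
  simp only [e] at hsum
  rw [sum_side hw hwb hφ0 hft N hN hz.2, pole_side hw hwb ha₀ hφ0 hft hz.2] at hsum
  exact (sub_eq_of_eq_add hsum).symm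

end VK

namespace VK
open Complex Set Topology MeasureTheory

def ramp (L η a : ℝ) : ℝ := max 0 (min 1 ((L + η - a) / η))

lemma ramp_cont (L η : ℝ) : Continuous (ramp L η) := by
  unfold ramp; fun_prop

lemma ramp_nonneg (L η a : ℝ) : 0 ≤ ramp L η a := le_max_left _ _

lemma ramp_le_one (L η a : ℝ) : ramp L η a ≤ 1 := max_le (by norm_num) (min_le_left _ _)

lemma ramp_one {L η a : ℝ} (hη : 0 < η) (ha : a ≤ L) : ramp L η a = 1 := by
  unfold ramp
  have : 1 ≤ (L + η - a) / η := by rw [le_div_iff₀ hη]; linarith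
  rw [min_eq_left this]; simp

lemma ramp_zero {L η a : ℝ} (hη : 0 < η) (ha : L + η ≤ a) : ramp L η a = 0 := by
  unfold ramp
  have : (L + η - a) / η ≤ 0 := div_nonpos_of_nonpos_of_nonneg (by linarith) hη.le
  exact max_eq_left ((min_le_right _ _).trans this)

lemma ramp_mid {L η a : ℝ} (hη : 0 < η) (h1 : L ≤ a) (h2 : a ≤ L + η) :
    ramp L η a = (L + η - a) / η := by
  unfold ramp
  have h3 : 0 ≤ (L + η - a) / η := div_nonneg (by linarith) hη.le
  have h4 : (L + η - a) / η ≤ 1 := by rw [div_le_iff₀ hη]; linarith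
  rw [min_eq_right h4, max_eq_right h3]

def EE (L η : ℝ) (s : ℂ) : ℂ :=
  Complex.exp (s * L) * (Complex.exp (s * η) - 1) / (η * s ^ 2) - 1 / s

lemma ramp_integral {L η : ℝ} (hL : 0 ≤ L) (hη : 0 < η) {s : ℂ} (hs : s ≠ 0) :
    ∫ a in (0:ℝ)..(L + η), Complex.exp (s * a) * (ramp L η a : ℂ) = EE L η s := by
  have hηc : (η : ℂ) ≠ 0 := by exact_mod_cast hη.ne'
  have hc : Continuous fun a : ℝ => Complex.exp (s * a) * (ramp L η a : ℂ) := by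
    have := ramp_cont L η
    fun_prop
  rw [← intervalIntegral.integral_add_adjacent_intervals (b := L) (hc.intervalIntegrable _ _)
    (hc.intervalIntegrable _ _)]
  have e1 : ∫ a in (0:ℝ)..L, Complex.exp (s * a) * (ramp L η a : ℂ) =
      ∫ a in (0:ℝ)..L, Complex.exp (s * a) := by
    apply intervalIntegral.integral_congr
    intro a ha
    rw [uIcc_of_le hL] at ha
    simp only
    rw [ramp_one hη ha.2]; simp
  have e2 : ∫ a in L..(L + η), Complex.exp (s * a) * (ramp L η a : ℂ) =
      ∫ a in L..(L + η), Complex.exp (s * a) * ((L + η - a) / η) := by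
    apply intervalIntegral.integral_congr
    intro a ha
    rw [uIcc_of_le (by linarith)] at ha
    simp only
    rw [ramp_mid hη ha.1 ha.2]; push_cast; rfl
  rw [e1, e2, integral_exp_mul_complex hs]
  have hd : ∀ a ∈ uIcc L (L + η), HasDerivAt (fun a : ℝ => Complex.exp (s * a) *
      ((L + η - a) / (s * η) + 1 / (s ^ 2 * η))) (Complex.exp (s * a) * ((L + η - a) / η)) a := by
    intro a _
    have h1 : HasDerivAt (fun a : ℝ => s * (a : ℂ)) (s * 1) a :=
      (Complex.ofRealCLM.hasDerivAt).const_mul s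
    have h2 := h1.cexp
    have h3 : HasDerivAt (fun a : ℝ => ((L + η - a) / (s * η) + 1 / (s ^ 2 * η) : ℂ))
        (-1 / (s * η)) a := by
      have : HasDerivAt (fun a : ℝ => (a : ℂ)) 1 a := Complex.ofRealCLM.hasDerivAt
      exact ((this.const_sub (L + η : ℂ)).div_const _).add_const _
    refine (h2.mul h3).congr_deriv ?_
    field_simp
    ring
  rw [intervalIntegral.integral_eq_sub_of_hasDerivAt hd (by
    apply Continuous.intervalIntegrable; fun_prop)]
  unfold EE
  push_cast
  rw [mul_add s, Complex.exp_add]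
  field_simp
  simp
  ring

lemma three_norm {σ t : ℝ} (hσ : 1/2 < σ) : 1 + |t| ≤ 3 * ‖(σ + t * I : ℂ)‖ := by
  have h1 := Complex.abs_im_le_norm (σ + t * I : ℂ)
  have h2 := Complex.re_le_norm (σ + t * I : ℂ)
  simp at h1 h2
  linarith

lemma EE_bound {L η σ t : ℝ} (hL : 0 ≤ L) (hη : 0 < η) (hη1 : η ≤ 1) (hσ : 1/2 < σ) (hσ1 : σ ≤ 1) :
    |(EE L η (σ + t * I)).re| ≤ 3 * Real.exp (σ * (L + η)) / ‖(σ + t * I : ℂ)‖ ∧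
    |(EE L η (σ + t * I)).re| ≤ 3 * Real.exp (σ * (L + η)) / η / ‖(σ + t * I : ℂ)‖ ^ 2 := by
  set s : ℂ := σ + t * I with hs
  have hsre : s.re = σ := by simp [hs]
  have hs3 := three_norm (t := t) hσ
  rw [← hs] at hs3
  have hn : 0 < ‖s‖ := by linarith [abs_nonneg t]
  set A := Real.exp (σ * (L + η)) with hA
  have hA1 : 1 ≤ A := Real.one_le_exp (by positivity)
  have hAe : A = Real.exp (σ * L) * Real.exp (σ * η) := by rw [hA, ← Real.exp_add]; ring_nf
  have heL : ‖Complex.exp (s * L)‖ = Real.exp (σ * L) := by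
    rw [Complex.norm_exp]; simp [hsre]
  have heη : ‖Complex.exp (s * η)‖ = Real.exp (σ * η) := by
    rw [Complex.norm_exp]; simp [hsre]
  have h1η : 1 ≤ Real.exp (σ * η) := Real.one_le_exp (by positivity)
  have hd1 : ‖Complex.exp (s * η) - 1‖ ≤ 2 * Real.exp (σ * η) := by
    have := norm_sub_le (Complex.exp (s * η)) 1
    rw [heη, norm_one] at this; linarith
  have hsη : ‖s * η‖ = ‖s‖ * η := by rw [norm_mul, Complex.norm_real, Real.norm_of_nonneg hη.le]
  have hd2 : ‖Complex.exp (s * η) - 1‖ ≤ 2 * (‖s‖ * η) * Real.exp (σ * η) := by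
    rcases le_total (‖s‖ * η) 1 with h | h
    · have := Complex.norm_exp_sub_one_le (x := s * η) (by rw [hsη]; exact h)
      rw [hsη] at this
      have h0 : 0 ≤ ‖s‖ * η := by positivity
      nlinarith
    · nlinarith
  have hfirst : ‖Complex.exp (s * L) * (Complex.exp (s * η) - 1) / (η * s ^ 2)‖ =
      Real.exp (σ * L) * ‖Complex.exp (s * η) - 1‖ / (η * ‖s‖ ^ 2) := by
    rw [norm_div, norm_mul, norm_mul, norm_pow, Complex.norm_real, Real.norm_of_nonneg hη.le, heL]
  constructor
  · refine (Complex.abs_re_le_norm _).trans ((norm_sub_le _ _).trans ?_)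
    rw [hfirst, norm_div, norm_one]
    calc _ ≤ Real.exp (σ * L) * (2 * (‖s‖ * η) * Real.exp (σ * η)) / (η * ‖s‖ ^ 2) + A / ‖s‖ := by
          gcongr
      _ = _ := by rw [hAe]; field_simp; ring
  · unfold EE
    rw [Complex.sub_re]
    refine (abs_sub _ _).trans ?_
    have h2 : |(1 / s).re| ≤ A / η / ‖s‖ ^ 2 := by
      rw [one_div, Complex.inv_re, hsre, Complex.normSq_eq_norm_sq, abs_of_nonneg (by positivity)]
      gcongr
      rw [le_div_iff₀ hη]
      nlinarith
    have h3 : |(Complex.exp (s * L) * (Complex.exp (s * η) - 1) / (η * s ^ 2)).re| ≤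
        2 * A / η / ‖s‖ ^ 2 := by
      refine (Complex.abs_re_le_norm _).trans ?_
      rw [hfirst]
      calc _ ≤ Real.exp (σ * L) * (2 * Real.exp (σ * η)) / (η * ‖s‖ ^ 2) := by gcongr
        _ = _ := by rw [hAe]; field_simp
    calc _ ≤ 2 * A / η / ‖s‖ ^ 2 + A / η / ‖s‖ ^ 2 := add_le_add h3 h2
      _ = _ := by ring

lemma test_fun {L η σ : ℝ} (hL : 0 ≤ L) (hη : 0 < η) (hη1 : η ≤ 1) (hσ : 1/2 < σ) (hσ1 : σ ≤ 1) :
    ∃ w : ℝ → ℝ, Continuous w ∧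
    (∀ t, |w t| ≤ 9 * Real.exp (σ * (L + η)) / (1 + |t|)) ∧
    (∀ t, |w t| ≤ 9 * Real.exp (σ * (L + η)) / η / (1 + |t|) ^ 2) ∧
    (∀ a : ℝ, ∫ t : ℝ, (w t : ℂ) * Complex.exp (-(t * a) * I) =
      ((Real.exp (σ * |a|) * ramp L η |a| : ℝ) : ℂ)) := by
  set A := Real.exp (σ * (L + η)) with hA
  have hA0 : 0 < A := Real.exp_pos _
  set w : ℝ → ℝ := fun t => (EE L η (σ + t * I)).re / π with hw
  have hs0 : ∀ t : ℝ, (σ + t * I : ℂ) ≠ 0 := fun t h => by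
    have := three_norm (t := t) hσ
    rw [h, norm_zero] at this
    linarith [abs_nonneg t]
  have hηc : (η : ℂ) ≠ 0 := by exact_mod_cast hη.ne'
  have hwc : Continuous w := by
    have : Continuous fun t : ℝ => EE L η (σ + t * I) := by
      unfold EE
      apply Continuous.sub
      · apply Continuous.div (by fun_prop) (by fun_prop)
        intro t
        exact mul_ne_zero hηc (pow_ne_zero _ (hs0 t))
      · exact continuous_const.div (by fun_prop) hs0
    exact (Complex.continuous_re.comp this).div_const _
  have hwle : ∀ t, |w t| ≤ |(EE L η (σ + t * I)).re| / 3 := fun t => by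
    rw [hw]
    simp only [abs_div, abs_of_pos pi_pos]
    gcongr
    exact pi_gt_three.le
  have hb2 : ∀ t, |w t| ≤ 9 * A / η / (1 + |t|) ^ 2 := fun t => by
    refine (hwle t).trans ?_
    have h3 := three_norm (t := t) hσ
    have h0 := abs_nonneg t
    have h4 : (1 + |t|) ^ 2 ≤ 9 * ‖(σ + t * I : ℂ)‖ ^ 2 := by nlinarith
    calc _ ≤ 3 * A / η / ‖(σ + t * I : ℂ)‖ ^ 2 / 3 := by gcongr; exact (EE_bound hL hη hη1 hσ hσ1).2
      _ = 9 * A / η / (9 * ‖(σ + t * I : ℂ)‖ ^ 2) := by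
        have : ‖(σ + t * I : ℂ)‖ ≠ 0 := norm_ne_zero_iff.mpr (hs0 t)
        field_simp; try norm_num
      _ ≤ _ := by gcongr
  refine ⟨w, hwc, fun t => ?_, hb2, fun a => ?_⟩
  · refine (hwle t).trans ?_
    have h3 := three_norm (t := t) hσ
    have h0 := abs_nonneg t
    have : ‖(σ + t * I : ℂ)‖ ≠ 0 := norm_ne_zero_iff.mpr (hs0 t)
    calc _ ≤ 3 * A / ‖(σ + t * I : ℂ)‖ / 3 := by gcongr; exact (EE_bound hL hη hη1 hσ hσ1).1
      _ = 3 * A / (3 * ‖(σ + t * I : ℂ)‖) := by field_simp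
      _ ≤ 9 * A / (1 + |t|) := by gcongr; norm_num
  · set φ : ℝ → ℂ := fun a => ((Real.exp (σ * |a|) * ramp L η |a| : ℝ) : ℂ) with hφ
    have hφc : Continuous φ := by
      have := ramp_cont L η
      fun_prop
    have hφz : ∀ a, L + η ≤ |a| → φ a = 0 := fun a ha => by
      simp [hφ, ramp_zero hη ha]
    have hφi : Integrable φ := by
      apply hφc.integrable_of_hasCompactSupport
      apply HasCompactSupport.intro (K := Icc (-(L+η)) (L+η)) isCompact_Icc
      intro x hx
      apply hφz
      by_contra h
      exact hx (abs_le.mp (not_le.mp h).le)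
    have hEconj : ∀ t : ℝ, EE L η (σ + t * I) + EE L η (σ - t * I) = ((2 * π * w t : ℝ) : ℂ) := by
      intro t
      have : EE L η (σ - t * I) = (starRingEnd ℂ) (EE L η (σ + t * I)) := by
        unfold EE
        simp [← Complex.exp_conj, sub_eq_add_neg]
      rw [this, Complex.add_conj, hw]
      have := pi_pos.ne'
      congr 1; field_simp
    have hF : ∀ t : ℝ, ∫ a : ℝ, φ a * Complex.exp (-(t * a) * I) = ((2 * π * w t : ℝ) : ℂ) := by
      intro t
      have hc : Continuous fun a : ℝ => φ a * Complex.exp (-(t * a) * I) := by fun_prop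
      rw [← intervalIntegral.integral_eq_integral_of_support_subset (a := -(L+η)) (b := L+η)]
      · rw [← intervalIntegral.integral_add_adjacent_intervals (b := 0) (hc.intervalIntegrable _ _)
          (hc.intervalIntegrable _ _), ← hEconj, ← ramp_integral hL hη (hs0 t),
          ← ramp_integral hL hη (s := σ - t * I) (by have := hs0 (-t); simpa [sub_eq_add_neg] using this)]
        congr 1
        · rw [← neg_zero, ← intervalIntegral.integral_comp_neg, neg_zero]
          apply intervalIntegral.integral_congr
          intro a ha
          rw [uIcc_of_le (by linarith)] at ha
          simp only [hφ]
          rw [abs_neg, abs_of_nonneg ha.1]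
          push_cast
          rw [mul_right_comm, ← Complex.exp_add]; congr 2; ring
        · apply intervalIntegral.integral_congr
          intro a ha
          rw [uIcc_of_le (by linarith)] at ha
          simp only [hφ]
          rw [abs_of_nonneg ha.1]
          push_cast
          rw [mul_right_comm, ← Complex.exp_add]; congr 2; ring
      · intro a ha
        rw [Function.mem_support] at ha
        have : |a| < L + η := by
          by_contra h
          exact ha (by rw [hφz a (not_lt.mp h), zero_mul])
        have := abs_lt.mp this
        exact ⟨this.1, this.2.le⟩
    have hFT : ∀ ξ : ℝ, FourierTransform.fourier φ ξ = ((2 * π * w (2 * π * ξ) : ℝ) : ℂ) := by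
      intro ξ
      rw [Real.fourier_eq', ← hF]
      congr 1; ext a
      rw [smul_eq_mul, mul_comm]
      congr 2
      simp
      ring
    have hwi := w_integrable hwc hb2
    have hFi : Integrable (FourierTransform.fourier φ) := by
      have : FourierTransform.fourier φ = fun ξ : ℝ => ((2 * π : ℝ) : ℂ) * (w (2 * π * ξ) : ℂ) := by
        ext ξ; rw [hFT]; push_cast; ring
      rw [this]
      exact (hwi.comp_mul_left' (by positivity)).const_mul _
    have hinv := congrFun (hφc.fourierInv_fourier_eq hφi hFi) (-a)
    rw [Real.fourierInv_eq'] at hinv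
    have hfin : φ (-a) = φ a := by simp [hφ]
    rw [hfin] at hinv
    change _ = φ a
    rw [← hinv]
    have e : ∀ v : ℝ, Complex.exp (↑(2 * π * inner ℝ v (-a)) * I) • FourierTransform.fourier φ v =
      ((2 * π : ℝ) : ℂ) * (fun t : ℝ => (w t : ℂ) * Complex.exp (-(t * a) * I)) (2 * π * v) := by
      intro v
      rw [hFT, smul_eq_mul]
      simp only
      push_cast
      rw [mul_comm, mul_assoc]
      congr 3
      simp
      ring
    simp only [e]
    rw [integral_const_mul, Measure.integral_comp_mul_left (fun t : ℝ => (w t : ℂ) * Complex.exp (-(t * a) * I)) (2 * π)]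
    rw [abs_of_pos (by positivity), Complex.real_smul, ← mul_assoc]
    have : ((2 * π : ℝ) : ℂ) * (((2 * π)⁻¹ : ℝ) : ℂ) = 1 := by
      rw [← Complex.ofReal_mul, mul_inv_cancel₀ (by positivity)]; simp
    rw [this, one_mul]

end VK

namespace VK
open Complex Set Topology MeasureTheory

lemma tele {v β : ℝ} (hv : 1 < v) (hβ : 0 < β) :
    β * v ^ (-1 - β) ≤ (v - 1) ^ (-β) - v ^ (-β) := by
  have hv0 : 0 < v := by linarith
  have h1 : (v - 1) ^ (-β) = v ^ (-β) * (1 - 1/v) ^ (-β) := by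
    rw [← Real.mul_rpow hv0.le (by rw [sub_nonneg, div_le_one hv0]; exact hv.le)]
    congr 1; field_simp
  have hq : 0 < 1 - 1/v := by rw [sub_pos, div_lt_one hv0]; exact hv
  have h2 : 1 + β / v ≤ (1 - 1/v) ^ (-β) := by
    rw [Real.rpow_def_of_pos hq]
    have h3 := Real.log_le_sub_one_of_pos hq
    have h4 := Real.add_one_le_exp (Real.log (1 - 1/v) * -β)
    have h5 : β / v = β * (1/v) := by ring
    rw [h5]
    nlinarith
  have h3 : v ^ (-1 - β) = v ^ (-β) / v := by
    rw [show -1 - β = -β - 1 by ring, Real.rpow_sub_one hv0.ne']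
  rw [h1, h3]
  have h4 : 0 < v ^ (-β) := Real.rpow_pos_of_pos hv0 _
  have h5 := mul_le_mul_of_nonneg_left h2 h4.le
  have h6 : β * (v ^ (-β) / v) = v ^ (-β) * (β / v) := by ring
  rw [h6]; linarith

lemma sum_rpow_le {β : ℝ} (hβ : 0 < β) (N : ℕ) :
    ∑ j ∈ Finset.range N, (1 + (j : ℝ)) ^ (-1 - β) ≤ 1 + 1 / β := by
  have key : ∀ N : ℕ, ∑ j ∈ Finset.range (N + 1), (1 + (j : ℝ)) ^ (-1 - β) ≤
      1 + 1 / β - (1 + (N : ℝ)) ^ (-β) / β := by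
    intro N
    induction N with
    | zero => simp
    | succ n ih =>
      rw [Finset.sum_range_succ]
      have h := tele (v := 1 + ((n + 1 : ℕ) : ℝ)) (β := β) (by push_cast; linarith [(n.cast_nonneg : (0:ℝ) ≤ n)]) hβ
      have e : 1 + ((n + 1 : ℕ) : ℝ) - 1 = 1 + (n : ℝ) := by push_cast; ring
      rw [e] at h
      have h2 : (1 + ((n + 1 : ℕ) : ℝ)) ^ (-1 - β) ≤
          (1 + (n : ℝ)) ^ (-β) / β - (1 + ((n + 1 : ℕ) : ℝ)) ^ (-β) / β := by
        rw [← sub_div, le_div_iff₀ hβ]; linarith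
      linarith
  have hle : ∑ j ∈ Finset.range N, (1 + (j : ℝ)) ^ (-1 - β) ≤
      ∑ j ∈ Finset.range (N + 1), (1 + (j : ℝ)) ^ (-1 - β) := by
    apply Finset.sum_le_sum_of_subset_of_nonneg
    · exact Finset.range_mono (by omega)
    · intros; positivity
  have : 0 ≤ (1 + (N : ℝ)) ^ (-β) / β := by positivity
  linarith [key N]

/-- The bound on one unit cell. -/
lemma cell_term {A Y α m : ℝ} (hA : 0 ≤ A) (hY : 0 < Y) (hα : 0 < α) (hα1 : α ≤ 1) (j : ℕ)
    (h1 : m ≤ A / (1 + j)) (h2 : m ≤ A * Y / (1 + j) ^ 2) :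
    m * Real.log (3 + j) ≤ 6 * A * Y ^ α / α * (1 + (j : ℝ)) ^ (-1 - α / 2) := by
  set u : ℝ := 1 + j with hu
  have hj : (0:ℝ) ≤ j := j.cast_nonneg
  have hu1 : 1 ≤ u := by rw [hu]; linarith
  have hu0 : 0 < u := by linarith
  have hm : m ≤ A * Y ^ α * u ^ (-1 - α) := by
    have e : A * Y ^ α * u ^ (-1 - α) = A / u * (Y / u) ^ α := by
      rw [Real.div_rpow hY.le hu0.le, show -1 - α = -α - 1 by ring, Real.rpow_sub_one hu0.ne',
        Real.rpow_neg hu0.le]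
      field_simp
    rw [e]
    rcases le_total 1 (Y / u) with h | h
    · refine h1.trans ?_
      exact le_mul_of_one_le_right (by positivity) (Real.one_le_rpow h hα.le)
    · refine h2.trans ?_
      have : Y / u ≤ (Y / u) ^ α := by
        have := Real.rpow_le_rpow_of_exponent_ge (x := Y / u) (by positivity) h hα1
        rwa [Real.rpow_one] at this
      calc A * Y / u ^ 2 = A / u * (Y / u) := by field_simp
        _ ≤ _ := by gcongr
  have hl : Real.log (3 + j) ≤ 6 / α * u ^ (α / 2) := by
    have h3 := Real.log_le_rpow_div (x := 3 + (j:ℝ)) (by linarith) (ε := α / 2) (by linarith)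
    have h4 : (3 + (j:ℝ)) ^ (α / 2) ≤ 3 * u ^ (α / 2) := by
      calc (3 + (j:ℝ)) ^ (α / 2) ≤ (3 * u) ^ (α / 2) := by
            gcongr; rw [hu]; linarith
        _ = 3 ^ (α / 2) * u ^ (α / 2) := by rw [Real.mul_rpow (by norm_num) hu0.le]
        _ ≤ 3 ^ (1:ℝ) * u ^ (α / 2) := by
            gcongr
            · norm_num
            · linarith
        _ = _ := by rw [Real.rpow_one]
    calc _ ≤ _ := h3
      _ ≤ 3 * u ^ (α / 2) / (α / 2) := by gcongr
      _ = _ := by field_simp; norm_num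
  have hl0 : 0 ≤ Real.log (3 + j) := Real.log_nonneg (by linarith)
  calc m * Real.log (3 + j) ≤ A * Y ^ α * u ^ (-1 - α) * (6 / α * u ^ (α / 2)) := by
        gcongr
    _ = 6 * A * Y ^ α / α * (u ^ (-1 - α) * u ^ (α / 2)) := by ring
    _ = _ := by rw [← Real.rpow_add hu0]; congr 2; ring

lemma logDeriv_line_cont (hRH : RiemannHypothesis) {σ : ℝ} (hσ : 1/2 < σ) :
    Continuous (fun t : ℝ => (logDeriv X (σ + t * I)).re) := by
  rw [continuous_iff_continuousAt]
  intro t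
  have h := (logDeriv_X_differentiableAt hRH (s := σ + t * I) (by simpa using hσ)).continuousAt
  exact Complex.continuous_re.continuousAt.comp
    (ContinuousAt.comp (g := logDeriv X) (f := fun t : ℝ => (σ + t * I : ℂ)) h (by fun_prop))

lemma err_bound (hRH : RiemannHypothesis) : ∃ C : ℝ, 0 < C ∧ ∀ (σ : ℝ), 1/2 < σ → σ ≤ 1 →
    ∀ (w : ℝ → ℝ) (A Y α : ℝ), 0 ≤ A → 0 < Y → 0 < α → α ≤ 1 → Continuous w →
    (∀ t, |w t| ≤ A / (1 + |t|)) → (∀ t, |w t| ≤ A * Y / (1 + |t|) ^ 2) →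
    Integrable (fun t : ℝ => w t * (G (σ + t * I)).re) →
    |∫ t : ℝ, w t * (G (σ + t * I)).re| ≤ C * A * Y ^ α / α ^ 2 := by
  obtain ⟨C, hC, hline⟩ := line_bound hRH
  refine ⟨2 * ((42 + C) * 18), by positivity, ?_⟩
  intro σ hσ hσ1 w A Y α hA hY hα hα1 hw hw1 hw2 hIntg
  set f : ℝ → ℝ := fun t => (logDeriv X (σ + t * I)).re with hf
  have hfc : Continuous f := logDeriv_line_cont hRH hσ
  have hf0 : ∀ t, 0 ≤ f t := fun t => re_logDeriv_X_nonneg hRH (by simpa using hσ)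
  have hGc : Continuous (fun t : ℝ => (G (σ + t * I)).re) :=
    Complex.continuous_re.comp (G_line_cont hRH (z := σ) (by simpa using hσ))
  have hG : ∀ t : ℝ, |(G (σ + t * I)).re| ≤ 42 * Real.log (2 + |t|) + f t := by
    intro t
    unfold G
    rw [Complex.sub_re]
    refine (abs_sub _ _).trans ?_
    have h1 := (Complex.abs_re_le_norm (D (σ + t * I))).trans
      (norm_D_le (s := σ + t * I) (by simp; linarith))
    have h2 := log_norm_le (s := σ + t * I) (by simp; linarith) (by simp; linarith)
    have h3 : (σ + t * I : ℂ).im = t := by simp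
    rw [h3] at h2
    have h4 : |(logDeriv X (σ + t * I)).re| = f t := abs_of_nonneg (hf0 t)
    rw [h4]; linarith
  have hcell : ∀ (k : ℝ) (j : ℕ), (|k| ≤ j + 1) → (∀ t ∈ Icc k (k + 1), (j : ℝ) ≤ |t| ∧ |t| ≤ j + 1) →
      ∫ t in k..(k+1), |w t * (G (σ + t * I)).re| ≤
        (42 + C) * (6 * A * Y ^ α / α * (1 + (j : ℝ)) ^ (-1 - α / 2)) := by
    intro k j hk htj
    have hj : (0:ℝ) ≤ j := j.cast_nonneg
    set m : ℝ := min (A / (1 + j)) (A * Y / (1 + j) ^ 2) with hm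
    have hm0 : 0 ≤ m := le_min (by positivity) (by positivity)
    have hct := cell_term (m := m) hA hY hα hα1 j (min_le_left _ _) (min_le_right _ _)
    have hl0 : 0 ≤ Real.log (3 + j) := Real.log_nonneg (by linarith)
    have hmono : ∫ t in k..(k+1), |w t * (G (σ + t * I)).re| ≤
        ∫ t in k..(k+1), (m * (42 * Real.log (3 + j)) + m * f t) := by
      apply intervalIntegral.integral_mono_on (by linarith)
      · exact (hw.mul hGc).abs.intervalIntegrable _ _
      · exact (continuous_const.add (continuous_const.mul hfc)).intervalIntegrable _ _
      · intro t ht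
        have h1 := htj t ht
        have hwm : |w t| ≤ m := by
          apply le_min
          · refine (hw1 t).trans ?_
            gcongr
            exact h1.1
          · refine (hw2 t).trans ?_
            gcongr
            exact h1.1
        rw [abs_mul, ← mul_add]
        gcongr
        refine (hG t).trans ?_
        gcongr ?_ + _
        gcongr 42 * ?_
        apply Real.log_le_log (by positivity)
        linarith
    have hle := hline σ hσ hσ1 k
    have hlog : Real.log (2 + |k|) ≤ Real.log (3 + j) :=
      Real.log_le_log (by positivity) (by linarith)
    have hsplit : ∫ t in k..(k+1), (m * (42 * Real.log (3 + j)) + m * f t) =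
        m * (42 * Real.log (3 + j)) + m * ∫ t in k..(k+1), f t := by
      have hi2 : IntervalIntegrable (fun t => m * f t) volume k (k+1) :=
        (continuous_const.mul hfc).intervalIntegrable _ _
      have hi1 : IntervalIntegrable (fun _ : ℝ => m * (42 * Real.log (3 + j))) volume k (k+1) :=
        continuous_const.intervalIntegrable _ _
      rw [intervalIntegral.integral_add hi1 hi2, intervalIntegral.integral_const_mul]
      simp
    calc _ ≤ _ := hmono
      _ = _ := hsplit
      _ ≤ m * (42 * Real.log (3 + j)) + m * (C * Real.log (3 + j)) := by
          gcongr
          exact hle.trans (by gcongr)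
      _ = (42 + C) * (m * Real.log (3 + j)) := by ring
      _ ≤ _ := by gcongr
  have hbound : ∀ N : ℕ, ∫ t in (-(N:ℝ))..N, |w t * (G (σ + t * I)).re| ≤
      2 * ((42 + C) * 18) * A * Y ^ α / α ^ 2 := by
    intro N
    have hii : ∀ a b : ℝ, IntervalIntegrable (fun t => |w t * (G (σ + t * I)).re|) volume a b :=
      fun a b => (hw.mul hGc).abs.intervalIntegrable _ _
    have hind : ∀ N : ℕ, ∫ t in (-(N:ℝ))..N, |w t * (G (σ + t * I)).re| ≤
        ∑ j ∈ Finset.range N, 2 * ((42 + C) * (6 * A * Y ^ α / α * (1 + (j : ℝ)) ^ (-1 - α / 2))) := by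
      intro N
      induction N with
      | zero => simp
      | succ n ih =>
        have hn : (0:ℝ) ≤ n := n.cast_nonneg
        rw [Finset.sum_range_succ]
        have h1 := hcell n n (by rw [abs_of_nonneg hn]; linarith) (fun t ht => by
          rw [abs_of_nonneg (hn.trans ht.1)]; exact ht)
        have h2 := hcell (-(n:ℝ) - 1) n (by rw [abs_le]; constructor <;> linarith) (fun t ht => by
          have : t ≤ 0 := by linarith [ht.2]
          rw [abs_of_nonpos this]
          constructor <;> linarith [ht.1, ht.2])
        rw [sub_add_cancel] at h2
        have e := intervalIntegral.integral_add_adjacent_intervals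
          (hii (-(n:ℝ) - 1) (-(n:ℝ))) (hii (-(n:ℝ)) n)
        have e' := intervalIntegral.integral_add_adjacent_intervals
          (hii (-(n:ℝ) - 1) n) (hii n (n+1))
        have ee : (-((n + 1 : ℕ) : ℝ)) = -(n:ℝ) - 1 := by push_cast; ring
        rw [ee]; push_cast
        rw [← e', ← e]
        linarith
    refine (hind N).trans ?_
    rw [← Finset.mul_sum, ← Finset.mul_sum, ← Finset.mul_sum]
    have hs := sum_rpow_le (β := α / 2) (by positivity) N
    have hs2 : 1 + 1 / (α / 2) ≤ 3 / α := by
      rw [le_div_iff₀ hα]; field_simp; linarith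
    calc _ ≤ 2 * ((42 + C) * (6 * A * Y ^ α / α * (3 / α))) := by
          gcongr; exact hs.trans hs2
      _ = _ := by field_simp; ring
  have htend := intervalIntegral_tendsto_integral (μ := volume) (a := fun N : ℕ => -(N:ℝ))
    (b := fun N : ℕ => (N:ℝ)) (l := atTop) hIntg.abs
    (tendsto_neg_atTop_atBot.comp tendsto_natCast_atTop_atTop) tendsto_natCast_atTop_atTop
  exact (abs_integral_le_integral_abs).trans (le_of_tendsto' htend hbound)

end VK

namespace VK
open Complex Set Topology MeasureTheory

lemma smooth_est (hRH : RiemannHypothesis) : ∃ C : ℝ, 0 < C ∧ ∀ L η δ : ℝ, 0 ≤ L → 0 < η → η ≤ 1 →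
    0 < δ → δ ≤ 1/2 → ∀ N : ℕ, L + η ≤ Real.log (N + 1) →
    |∑ n ∈ Finset.range (N + 1), ArithmeticFunction.vonMangoldt n * ramp L η (Real.log n) -
      ∫ a in Ioc 0 (L + η), Real.exp a * ramp L η a| ≤
      C * Real.exp ((1/2 + δ) * (L + η)) * (1 / η) ^ δ / δ ^ 2 := by
  obtain ⟨C, hC, herr⟩ := err_bound hRH
  refine ⟨C * 9, by positivity, fun L η δ hL hη hη1 hδ hδ2 N hN => ?_⟩
  set σ := 1/2 + δ with hσd
  have hσ : 1/2 < σ := by rw [hσd]; linarith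
  have hσ1 : σ ≤ 1 := by rw [hσd]; linarith
  obtain ⟨w, hw, hw1, hw2, hft⟩ := test_fun hL hη hη1 hσ hσ1
  set φ : ℝ → ℝ := fun a => Real.exp (σ * |a|) * ramp L η |a| with hφ
  have hφc : Continuous φ := by
    have := ramp_cont L η
    fun_prop
  obtain ⟨hI, hE⟩ := explicit_formula hRH (φ := φ) (a₀ := L + η) hw hw2 (by linarith) hφc
    (fun a ha => by
      have h0 : 0 ≤ a := by linarith
      simp only [hφ]
      rw [abs_of_nonneg h0, ramp_zero hη ha, mul_zero]) (fun a _ => hft a) N hN hσ hσ1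
  have hS : ∑ n ∈ Finset.range (N + 1),
      (ArithmeticFunction.vonMangoldt n : ℂ) * Complex.exp (-(σ * Real.log n)) * φ (Real.log n) =
      ((∑ n ∈ Finset.range (N + 1), ArithmeticFunction.vonMangoldt n * ramp L η (Real.log n) : ℝ) : ℂ) := by
    push_cast
    apply Finset.sum_congr rfl
    intro n _
    simp only [hφ]
    rw [abs_of_nonneg (Real.log_natCast_nonneg n)]
    push_cast
    rw [mul_assoc, ← mul_assoc (Complex.exp _), ← Complex.exp_add, neg_add_cancel, Complex.exp_zero,
      one_mul]
  have hM : ∫ a in Ioc 0 (L + η), Complex.exp ((1 - σ) * a) * φ a =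
      ((∫ a in Ioc 0 (L + η), Real.exp a * ramp L η a : ℝ) : ℂ) := by
    rw [← integral_complex_ofReal]
    apply setIntegral_congr_fun measurableSet_Ioc
    intro a ha
    simp only [hφ]
    rw [abs_of_pos ha.1]
    push_cast
    rw [← mul_assoc, ← Complex.exp_add]
    congr 2; ring
  rw [hS, hM, ← Complex.ofReal_sub] at hE
  have hre := congrArg Complex.re hE
  rw [Complex.ofReal_re] at hre
  have hre2 : (∫ t : ℝ, (w t : ℂ) * G (σ + t * I)).re = ∫ t : ℝ, w t * (G (σ + t * I)).re := by
    have := integral_re (𝕜 := ℂ) hI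
    simp only [RCLike.re_eq_complex_re, Complex.re_ofReal_mul] at this
    exact this.symm
  have hI2 : Integrable (fun t : ℝ => w t * (G (σ + t * I)).re) := by
    have := hI.re
    simp only [RCLike.re_eq_complex_re, Complex.re_ofReal_mul] at this
    exact this
  rw [← hre, hre2]
  have := herr σ hσ hσ1 w (9 * Real.exp (σ * (L + η))) (1 / η) δ (by positivity) (by positivity) hδ
    (by linarith) hw hw1 (fun t => (hw2 t).trans (le_of_eq (by ring))) hI2
  exact this.trans (le_of_eq (by ring))

lemma main_upper {L η : ℝ} (hL : 0 ≤ L) (hη : 0 < η) :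
    ∫ a in Ioc 0 (L + η), Real.exp a * ramp L η a ≤ Real.exp (L + η) := by
  have hc := ramp_cont L η
  rw [← intervalIntegral.integral_of_le (by linarith)]
  calc _ ≤ ∫ a in (0:ℝ)..(L + η), Real.exp a := by
        apply intervalIntegral.integral_mono_on (by linarith)
        · apply Continuous.intervalIntegrable; fun_prop
        · apply Continuous.intervalIntegrable; fun_prop
        · intro a _
          exact mul_le_of_le_one_right (Real.exp_pos _).le (ramp_le_one _ _ _)
    _ ≤ _ := by rw [integral_exp]; linarith [Real.exp_pos 0]

lemma main_lower {L η : ℝ} (hL : 0 ≤ L) (hη : 0 < η) :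
    Real.exp L - 1 ≤ ∫ a in Ioc 0 (L + η), Real.exp a * ramp L η a := by
  have hc := ramp_cont L η
  have hi : ∀ a b : ℝ, IntervalIntegrable (fun a => Real.exp a * ramp L η a) volume a b := by
    intro a b; apply Continuous.intervalIntegrable; fun_prop
  rw [← intervalIntegral.integral_of_le (by linarith),
    ← intervalIntegral.integral_add_adjacent_intervals (hi 0 L) (hi L (L + η))]
  have h1 : ∫ a in (0:ℝ)..L, Real.exp a * ramp L η a = Real.exp L - 1 := by
    rw [← Real.exp_zero, ← integral_exp]
    apply intervalIntegral.integral_congr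
    intro a ha
    rw [uIcc_of_le hL] at ha
    simp only
    rw [ramp_one hη ha.2, mul_one]
  have h2 : 0 ≤ ∫ a in L..(L + η), Real.exp a * ramp L η a :=
    intervalIntegral.integral_nonneg (by linarith)
      fun a _ => mul_nonneg (Real.exp_pos _).le (ramp_nonneg _ _ _)
  linarith

end VK

/-- von Koch: assuming RH, `ψ(x) = x + O(x^{1/2} (log x)²)` for `x ≥ 2`. -/
theorem von_koch_psi (hRH : RiemannHypothesis) :
    ∃ C : ℝ, 0 < C ∧ ∀ x : ℝ, 2 ≤ x →
      |chebyshevPsi x - x| ≤ C * x ^ ((1 : ℝ) / 2) * Real.log x ^ 2 := by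
  obtain ⟨C, hC, hest⟩ := VK.smooth_est hRH
  refine ⟨C * Real.exp 3 * 16 + 8, by positivity, fun x hx => ?_⟩
  have hx0 : 0 < x := by linarith
  set l := Real.log x with hl
  have hxl : Real.exp l = x := Real.exp_log hx0
  have hl1 : 2/3 ≤ l := by
    have h1 : Real.log 2 ≤ l := Real.log_le_log (by norm_num) hx
    have := Real.log_two_gt_d9
    linarith
  set r := x ^ ((1:ℝ)/2) with hr
  have hre : r = Real.exp (l / 2) := by
    rw [hr, Real.rpow_def_of_pos hx0]; congr 1; ring
  have hr1 : 1 ≤ r := by rw [hre]; exact Real.one_le_exp (by linarith)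
  have hr0 : 0 < r := by linarith
  have hrr : r * r = x := by rw [hre, ← Real.exp_add, ← hxl]; congr 1; ring
  set δ := 1 / (2 + l) with hδ
  have hδ0 : 0 < δ := by rw [hδ]; positivity
  have hδ2 : δ ≤ 1/2 := by rw [hδ]; apply one_div_le_one_div_of_le <;> linarith
  have hδl : δ * l ≤ 1 := by
    rw [hδ, div_mul_eq_mul_div, one_mul, div_le_one (by linarith)]; linarith
  set η := 1 / (2 * r) with hη
  have hη0 : 0 < η := by rw [hη]; positivity
  have hη2 : η ≤ 1/2 := by rw [hη]; apply one_div_le_one_div_of_le <;> linarith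
  have hxη : x * η = r / 2 := by rw [hη, ← hrr]; field_simp
  -- the error term
  have herr : ∀ L : ℝ, L + η ≤ l + 1 →
      C * Real.exp ((1/2 + δ) * (L + η)) * (1 / η) ^ δ / δ ^ 2 ≤ C * Real.exp 3 * 16 * r * l ^ 2 := by
    intro L hLη
    have h1 : Real.exp ((1/2 + δ) * (L + η)) ≤ r * Real.exp 2 := by
      rw [hre, ← Real.exp_add]
      apply Real.exp_le_exp.mpr
      have : (1/2 + δ) * (L + η) ≤ (1/2 + δ) * (l + 1) := by gcongr
      nlinarith
    have h2 : (1 / η) ^ δ ≤ Real.exp 1 := by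
      have e : 1 / η = Real.exp (Real.log 2 + l / 2) := by
        rw [hη, one_div_one_div, Real.exp_add, Real.exp_log (by norm_num), hre]
      rw [e, ← Real.exp_mul]
      apply Real.exp_le_exp.mpr
      have := Real.log_two_lt_d9
      nlinarith
    have h3 : 1 / δ ^ 2 ≤ 16 * l ^ 2 := by
      have : 1 / δ ^ 2 = (2 + l) ^ 2 := by rw [hδ]; field_simp
      rw [this]; nlinarith
    calc _ = C * Real.exp ((1/2 + δ) * (L + η)) * (1 / η) ^ δ * (1 / δ ^ 2) := by ring
      _ ≤ C * (r * Real.exp 2) * Real.exp 1 * (16 * l ^ 2) := by gcongr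
      _ = C * (Real.exp 2 * Real.exp 1) * 16 * r * l ^ 2 := by ring
      _ = _ := by rw [← Real.exp_add]; norm_num
  have h2r : 2 * r ≤ 8 * r * l ^ 2 := by
    have : 2 ≤ 8 * l ^ 2 := by nlinarith
    nlinarith
  rw [abs_le]
  constructor
  · -- lower bound
    have hL0 : 0 ≤ l - η := by linarith
    have hN : (l - η) + η ≤ Real.log ((⌊x⌋₊ : ℕ) + 1) := by
      rw [sub_add_cancel]
      exact Real.log_le_log hx0 (Nat.lt_floor_add_one x).le
    have h := (abs_le.mp (hest (l - η) η δ hL0 hη0 (by linarith) hδ0 hδ2 ⌊x⌋₊ hN)).1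
    have h2 := herr (l - η) (by linarith)
    have h3 := VK.main_lower hL0 hη0
    have h4 : x - r / 2 ≤ Real.exp (l - η) := by
      rw [sub_eq_add_neg l, Real.exp_add, hxl]
      have := Real.add_one_le_exp (-η)
      nlinarith
    have h5 : ∑ n ∈ Finset.range (⌊x⌋₊ + 1), ArithmeticFunction.vonMangoldt n *
        VK.ramp (l - η) η (Real.log n) ≤ chebyshevPsi x := by
      unfold chebyshevPsi
      rw [show Finset.Iic ⌊x⌋₊ = Finset.range (⌊x⌋₊ + 1) by ext n; simp]
      apply Finset.sum_le_sum
      intro n _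
      exact mul_le_of_le_one_right ArithmeticFunction.vonMangoldt_nonneg (VK.ramp_le_one _ _ _)
    have e : (C * Real.exp 3 * 16 + 8) * r * l ^ 2 = C * Real.exp 3 * 16 * r * l ^ 2 + 8 * r * l ^ 2 := by
      ring
    rw [e]
    linarith
  · -- upper bound
    have hL0 : 0 ≤ l := by linarith
    have hN : l + η ≤ Real.log ((⌊Real.exp (l + η)⌋₊ : ℕ) + 1) := by
      rw [Real.le_log_iff_exp_le (by positivity)]
      exact (Nat.lt_floor_add_one _).le
    have h := (abs_le.mp (hest l η δ hL0 hη0 (by linarith) hδ0 hδ2 _ hN)).2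
    have h2 := herr l (by linarith)
    have h3 := VK.main_upper hL0 hη0
    have h4 : Real.exp (l + η) ≤ x + r := by
      rw [Real.exp_add, hxl]
      have h6 := Real.exp_bound_div_one_sub_of_interval hη0.le (by linarith : η < 1)
      have h7 : 1 / (1 - η) ≤ 1 + 2 * η := by
        rw [div_le_iff₀ (by linarith)]; nlinarith
      nlinarith
    have h5 : chebyshevPsi x ≤ ∑ n ∈ Finset.range (⌊Real.exp (l + η)⌋₊ + 1),
        ArithmeticFunction.vonMangoldt n * VK.ramp l η (Real.log n) := by
      unfold chebyshevPsi
      have e : ∀ n ∈ Finset.Iic ⌊x⌋₊, ArithmeticFunction.vonMangoldt n =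
          ArithmeticFunction.vonMangoldt n * VK.ramp l η (Real.log n) := by
        intro n hn
        rw [VK.ramp_one hη0, mul_one]
        rw [Finset.mem_Iic, Nat.le_floor_iff hx0.le] at hn
        rcases Nat.eq_zero_or_pos n with h0 | h0
        · rw [h0]; simpa using hL0
        · exact Real.log_le_log (by exact_mod_cast h0) hn
      rw [Finset.sum_congr rfl e]
      apply Finset.sum_le_sum_of_subset_of_nonneg
      · intro n hn
        rw [Finset.mem_Iic] at hn
        rw [Finset.mem_range, Nat.lt_succ_iff]
        refine hn.trans (Nat.floor_le_floor ?_)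
        calc x = Real.exp l := hxl.symm
          _ ≤ _ := Real.exp_le_exp.mpr (by linarith)
      · intro n _ _
        exact mul_nonneg ArithmeticFunction.vonMangoldt_nonneg (VK.ramp_nonneg _ _ _)
    have e : (C * Real.exp 3 * 16 + 8) * r * l ^ 2 = C * Real.exp 3 * 16 * r * l ^ 2 + 8 * r * l ^ 2 := by
      ring
    rw [e]
    linarith
end
end
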